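/- arXiv:1705.00171 — 11 statements merged into one kernel-verified Lean document; each statement's English description precedes it below -/
import Mathlib

section
/- Let n ≥ 1 and let A and Ã be n×n real symmetric matrices all of whose off-diagonal entries are nonnegative. If A_{i,j} ≥ Ã_{i,j} for all indices i, j, then the largest eigenvalue of A is greater than or equal to the largest eigenvalue of Ã. -/
/-!
Take an eigenvector `v` of `B` for its largest eigenvalue `μB`, and let `|v|` be its entrywise
absolute value. Since the off-diagonal entries of `B` are nonnegative and `B ≤ A` entrywise,
`μB ‖v‖² = vᵀ B v ≤ |v|ᵀ A |v|` (`quadForm_le_abs`). The Rayleigh bound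
(`IsMaxEigenvalue.rayleigh_le`) gives `|v|ᵀ A |v| ≤ μA ‖v‖²`, and `‖v‖² > 0`.
-/

/-- `μ` is the largest (real) eigenvalue of the matrix `A`. -/
def IsMaxEigenvalue {n : ℕ} (A : Matrix (Fin n) (Fin n) ℝ) (μ : ℝ) : Prop :=
  (∃ v : Fin n → ℝ, v ≠ 0 ∧ A.mulVec v = μ • v) ∧
  ∀ μ' : ℝ, (∃ v : Fin n → ℝ, v ≠ 0 ∧ A.mulVec v = μ' • v) → μ' ≤ μ

open Matrix

/-- The Rayleigh bound: all eigenvalues of `μ • 1 - A` are nonnegative, so this matrix is positive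
semidefinite. -/
lemma IsMaxEigenvalue.rayleigh_le {n : ℕ} {A : Matrix (Fin n) (Fin n) ℝ} (hA : A.IsSymm)
    {μ : ℝ} (h : IsMaxEigenvalue A μ) (w : Fin n → ℝ) :
    w ⬝ᵥ A *ᵥ w ≤ μ * (w ⬝ᵥ w) := by
  have hM : (μ • (1 : Matrix (Fin n) (Fin n) ℝ) - A).IsHermitian := by
    rw [Matrix.IsHermitian, conjTranspose_eq_transpose_of_trivial, transpose_sub,
      transpose_smul, transpose_one, hA.eq]
  have hpsd : (μ • (1 : Matrix (Fin n) (Fin n) ℝ) - A).PosSemidef := by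
    rw [hM.posSemidef_iff_eigenvalues_nonneg]
    intro i
    have hev := hM.mulVec_eigenvectorBasis i
    have hne : (hM.eigenvectorBasis i).ofLp ≠ 0 := by
      intro h0
      exact hM.eigenvectorBasis.orthonormal.ne_zero i (by ext j; exact congrFun h0 j)
    rw [sub_mulVec, smul_mulVec, one_mulVec] at hev
    have := h.2 (μ - hM.eigenvalues i) ⟨_, hne, by rw [sub_smul, ← hev]; abel⟩
    simpa using this
  have := hpsd.dotProduct_mulVec_nonneg w
  rw [star_trivial, sub_mulVec, smul_mulVec, one_mulVec, dotProduct_sub, dotProduct_smul,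
    smul_eq_mul] at this
  linarith

lemma quadForm_le_abs {n : ℕ} {A B : Matrix (Fin n) (Fin n) ℝ}
    (hBoff : ∀ i j : Fin n, i ≠ j → 0 ≤ B i j) (hle : ∀ i j : Fin n, B i j ≤ A i j)
    (v : Fin n → ℝ) : v ⬝ᵥ B *ᵥ v ≤ |v| ⬝ᵥ A *ᵥ |v| := by
  simp only [dotProduct, mulVec, Finset.mul_sum, Pi.abs_apply]
  refine Finset.sum_le_sum fun i _ => Finset.sum_le_sum fun j _ => ?_
  have hnn : 0 ≤ |v i| * |v j| := by positivity
  have hBA := mul_le_mul_of_nonneg_right (hle i j) hnn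
  have hB : B i j * (v i * v j) ≤ B i j * (|v i| * |v j|) := by
    by_cases hij : i = j
    -- on the diagonal `B i i` may be negative, but there both sides agree
    · subst hij
      rw [abs_mul_abs_self]
    · exact mul_le_mul_of_nonneg_left ((le_abs_self _).trans (abs_mul _ _).le) (hBoff i j hij)
  linarith

theorem stmt_0 {n : ℕ} (hn : 1 ≤ n) (A B : Matrix (Fin n) (Fin n) ℝ)
    (hA : A.IsSymm) (hB : B.IsSymm)
    (hAoff : ∀ i j : Fin n, i ≠ j → 0 ≤ A i j)
    (hBoff : ∀ i j : Fin n, i ≠ j → 0 ≤ B i j)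
    (hle : ∀ i j : Fin n, B i j ≤ A i j)
    (μA μB : ℝ) (hμA : IsMaxEigenvalue A μA) (hμB : IsMaxEigenvalue B μB) :
    μB ≤ μA := by
  obtain ⟨v, hv, hBv⟩ := hμB.1
  have h1 := quadForm_le_abs hBoff hle v
  have h2 := hμA.rayleigh_le hA |v|
  have h3 : |v| ⬝ᵥ |v| = v ⬝ᵥ v := by simp [dotProduct]
  have h4 : 0 < v ⬝ᵥ v := by simpa using dotProduct_star_self_pos_iff.2 hv
  rw [hBv, dotProduct_smul, smul_eq_mul] at h1
  rw [h3] at h2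
  exact le_of_mul_le_mul_right (h1.trans h2) h4
end

section
/- Let n ≥ 1 and let A be an n×n real symmetric matrix all of whose off-diagonal entries are nonnegative. If v ∈ ℝⁿ has all entries strictly positive and Av = μv for some real μ, then μ is the largest eigenvalue of A. -/
theorem stmt_1 {n : ℕ} (hn : 1 ≤ n) (A : Matrix (Fin n) (Fin n) ℝ)
    (hA : A.IsSymm) (hAoff : ∀ i j : Fin n, i ≠ j → 0 ≤ A i j)
    (v : Fin n → ℝ) (hv : ∀ i, 0 < v i) (μ : ℝ) (hμ : A.mulVec v = μ • v) :
    IsMaxEigenvalue A μ := by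
  refine ⟨⟨v, fun h => (hv ⟨0, hn⟩).ne' (congrFun h _), hμ⟩, ?_⟩
  rintro μ' ⟨w, hw0, hw⟩
  haveI : Nonempty (Fin n) := ⟨⟨0, hn⟩⟩
  obtain ⟨i, hi⟩ := Finite.exists_max (fun j => |w j| / v j)
  set c := |w i| / v i with hc
  have hbound : ∀ j, |w j| ≤ c * v j := fun j => (div_le_iff₀ (hv j)).1 (hi j)
  have hci : c * v i = |w i| := div_mul_cancel₀ _ (hv i).ne'
  have hwi : 0 < |w i| := by
    refine lt_of_le_of_ne (abs_nonneg _) fun h => hw0 (funext fun j => ?_)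
    have hj := hbound j
    rw [hc, ← h, zero_div, zero_mul] at hj
    exact abs_nonpos_iff.1 hj
  -- The sign of `w i`, used to replace `w` by `±w` so that its `i`-th entry is positive.
  obtain ⟨s, hs1, hs⟩ : ∃ s : ℝ, |s| = 1 ∧ s * w i = |w i| := by
    rcases abs_choice (w i) with h | h
    · exact ⟨1, by simp, by rw [h, one_mul]⟩
    · exact ⟨-1, by simp, by rw [h, neg_one_mul]⟩
  have hterm : ∀ j, A i j * (s * w j) ≤ A i j * (c * v j) := by
    intro j
    by_cases hij : i = j
    · subst hij
      rw [hs, hci]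
    · refine mul_le_mul_of_nonneg_left ?_ (hAoff i j hij)
      calc s * w j ≤ |s * w j| := le_abs_self _
        _ = |w j| := by rw [abs_mul, hs1, one_mul]
        _ ≤ c * v j := hbound j
  have hsum_w : ∑ j, A i j * (s * w j) = μ' * |w i| := by
    have h : ∑ j, A i j * w j = μ' * w i := congrFun hw i
    simp_rw [mul_left_comm (A i _) s, ← Finset.mul_sum]
    rw [h, ← hs, mul_left_comm]
  have hsum_v : ∑ j, A i j * (c * v j) = μ * |w i| := by
    have h : ∑ j, A i j * v j = μ * v i := congrFun hμ i
    simp_rw [mul_left_comm (A i _) c, ← Finset.mul_sum]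
    rw [h, ← hci, mul_left_comm]
  have hle := Finset.sum_le_sum fun j (_ : j ∈ Finset.univ) => hterm j
  rw [hsum_w, hsum_v] at hle
  exact le_of_mul_le_mul_right hle hwi
end

section
/- Let L ≥ 3 be an integer and λ > 0 a real number. For every a ∈ {0,1}^L with exactly two ones and every vector v ∈ ℝ^L such that v_i = 0 whenever a_i = 0, one has vᵀ(Π^{ph}_a − λΠ)v ≤ ((3 − 2λ + √(1 + 2λ²))/4)·‖v‖². -/
/-!
The vector `v` is supported on the two sites `p < q` where `a` equals one, so the quadratic form is
that of a `2 × 2` block. If `q ≠ p + 1` the block is `-(λ/2) I`. If `q = p + 1` and neither site is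
an endpoint, the block has diagonal `1/2 - λ/2` and off-diagonal `λ/4`. If exactly one
site is an endpoint, the block has diagonal entries `1 - λ/2`, `1/2 - λ/2` and off-diagonal
`λ/(2√2)`, and its largest eigenvalue is exactly the claimed bound; since `L ≥ 3`, both sites cannot
be endpoints. `form_eq_pair` performs the reduction, and `edge_bound`, `bulk_bound` and `far_bound`
treat the three kinds of blocks.
-/

open Matrix

/-- The `L × L` matrix `Π` (1-based indices translated to `Fin L`):
diagonal entries `1/2`; entries `-1/(2√2)` on the off-diagonal positions
whose smaller (0-based) index is `0` or `L-2`; `-1/4` on the remaining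
off-diagonal adjacent positions; `0` elsewhere. -/
noncomputable def PiMat (L : ℕ) : Matrix (Fin L) (Fin L) ℝ :=
  Matrix.of fun i j =>
    if (i : ℕ) = (j : ℕ) then 1/2
    else if ((i : ℕ) + 1 = (j : ℕ) ∧ ((i : ℕ) = 0 ∨ (i : ℕ) = L - 2)) ∨
            ((j : ℕ) + 1 = (i : ℕ) ∧ ((j : ℕ) = 0 ∨ (j : ℕ) = L - 2)) then
      -1/(2*Real.sqrt 2)
    else if (i : ℕ) + 1 = (j : ℕ) ∨ (j : ℕ) + 1 = (i : ℕ) then -1/4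
    else 0

/-- The diagonal matrix `Π^{ph}_a` (1-based indices translated to `Fin L`). -/
noncomputable def PiPh (L : ℕ) (a : Fin L → ℝ) : Matrix (Fin L) (Fin L) ℝ :=
  Matrix.diagonal fun i =>
    let a' : ℕ → ℝ := fun k => if h : k < L then a ⟨k, h⟩ else 0
    if (i : ℕ) = 0 then a' 1
    else if (i : ℕ) = L - 1 then a' (L - 2)
    else (a' ((i : ℕ) - 1) + a' ((i : ℕ) + 1)) / 2

lemma sum_eq_pair {L : ℕ} {p q : Fin L} (hpq : p ≠ q) (f : Fin L → ℝ)
    (hf : ∀ i, i ≠ p → i ≠ q → f i = 0) : ∑ i, f i = f p + f q := by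
  rw [← Finset.sum_pair hpq]
  symm
  apply Finset.sum_subset (Finset.subset_univ _)
  intro i _ hi
  simp only [Finset.mem_insert, Finset.mem_singleton, not_or] at hi
  exact hf i hi.1 hi.2

/-- The block at an endpoint: `x` is the coordinate at the endpoint, `y` at its neighbour. -/
lemma edge_bound (lam x y : ℝ) :
    (1 - lam / 2) * x ^ 2 + (1 / 2 - lam / 2) * y ^ 2 + 2 * (lam / (2 * Real.sqrt 2)) * x * y ≤
      ((3 - 2 * lam + Real.sqrt (1 + 2 * lam ^ 2)) / 4) * (x ^ 2 + y ^ 2) := by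
  set s := Real.sqrt (1 + 2 * lam ^ 2) with hs
  have hs2 : s ^ 2 = 1 + 2 * lam ^ 2 := Real.sq_sqrt (by positivity)
  have hs1 : 1 ≤ s := Real.one_le_sqrt.mpr (by nlinarith [sq_nonneg lam])
  set r := Real.sqrt 2 with hr
  have hr2 : r ^ 2 = 2 := Real.sq_sqrt (by norm_num)
  have hrpos : 0 < r := Real.sqrt_pos.mpr (by norm_num)
  have h1 : lam / (2 * r) = lam * r / 4 := by
    field_simp
    rw [hr2]; ring
  rw [h1]
  -- Four times the difference is the form with matrix `[s - 1, -λ√2; -λ√2, s + 1]`,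
  -- whose determinant vanishes, so multiplying by `s + 1` makes it a perfect square.
  have key : 0 ≤ (s + 1) * ((s - 1) * x ^ 2 + (s + 1) * y ^ 2 - 2 * lam * r * x * y) := by
    have : (s + 1) * ((s - 1) * x ^ 2 + (s + 1) * y ^ 2 - 2 * lam * r * x * y)
        = ((s + 1) * y - lam * r * x) ^ 2 := by
      linear_combination x ^ 2 * hs2 - lam ^ 2 * x ^ 2 * hr2
    rw [this]; positivity
  have key2 := nonneg_of_mul_nonneg_right key (by linarith)
  linarith

lemma abs_le_sqrt_one_add (lam : ℝ) : |lam| ≤ Real.sqrt (1 + 2 * lam ^ 2) :=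
  Real.abs_le_sqrt (by nlinarith [sq_nonneg lam])

/-- The block of two adjacent interior sites. -/
lemma bulk_bound (lam x y : ℝ) (hlam : 0 < lam) :
    (1 / 2 - lam / 2) * x ^ 2 + (1 / 2 - lam / 2) * y ^ 2 + 2 * (lam / 4) * x * y ≤
      ((3 - 2 * lam + Real.sqrt (1 + 2 * lam ^ 2)) / 4) * (x ^ 2 + y ^ 2) := by
  have h := (le_abs_self lam).trans (abs_le_sqrt_one_add lam)
  have h2 := mul_le_mul_of_nonneg_right h (by positivity : 0 ≤ x ^ 2 + y ^ 2)
  nlinarith [mul_nonneg hlam.le (sq_nonneg (x - y)), sq_nonneg x, sq_nonneg y]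

/-- The block of two non-adjacent sites. -/
lemma far_bound (lam x y : ℝ) :
    (-(lam / 2)) * x ^ 2 + (-(lam / 2)) * y ^ 2 ≤
      ((3 - 2 * lam + Real.sqrt (1 + 2 * lam ^ 2)) / 4) * (x ^ 2 + y ^ 2) := by
  have h : 0 ≤ Real.sqrt (1 + 2 * lam ^ 2) := Real.sqrt_nonneg _
  have h2 := mul_nonneg h (by positivity : 0 ≤ x ^ 2 + y ^ 2)
  nlinarith [sq_nonneg x, sq_nonneg y]

/-- The quadratic form of a vector supported on two sites. -/
lemma form_eq_pair {L : ℕ} {p q : Fin L} (hpq : p ≠ q) (M : Matrix (Fin L) (Fin L) ℝ)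
    (v : Fin L → ℝ) (hv : ∀ i, i ≠ p → i ≠ q → v i = 0) :
    v ⬝ᵥ M.mulVec v =
      M p p * v p ^ 2 + M q q * v q ^ 2 + (M p q + M q p) * v p * v q := by
  have hM : ∀ i, M.mulVec v i = M i p * v p + M i q * v q := by
    intro i
    exact sum_eq_pair hpq (fun j => M i j * v j) (fun j h1 h2 => by simp [hv j h1 h2])
  rw [dotProduct, sum_eq_pair hpq _ (fun j h1 h2 => by simp [hv j h1 h2]), hM, hM]
  ring

lemma piPh_diag_eq_zero {L : ℕ} (hL : 3 ≤ L) (a : Fin L → ℝ) (i : Fin L)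
    (h : ∀ j : Fin L, (j : ℕ) + 1 = i ∨ (i : ℕ) + 1 = j → a j = 0) : PiPh L a i i = 0 := by
  have hi := i.isLt
  have h' : ∀ k : ℕ, k + 1 = i ∨ (i : ℕ) + 1 = k →
      (if hk : k < L then a ⟨k, hk⟩ else 0) = 0 := by
    intro k hk
    split_ifs with hkL
    · exact h ⟨k, hkL⟩ hk
    · rfl
  simp only [PiPh, Matrix.diagonal_apply_eq]
  by_cases h0 : (i : ℕ) = 0
  · rw [if_pos h0, h' 1 (by omega)]
  · rw [if_neg h0]
    by_cases h1 : (i : ℕ) = L - 1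
    · rw [if_pos h1, h' (L - 2) (by omega)]
    · rw [if_neg h1, h' (i - 1) (by omega), h' (i + 1) (by omega)]
      norm_num

lemma piMat_eq_zero {L : ℕ} (i j : Fin L) (h0 : (i : ℕ) ≠ j) (h1 : (i : ℕ) + 1 ≠ j)
    (h2 : (j : ℕ) + 1 ≠ i) : PiMat L i j = 0 := by
  simp [PiMat, h0, h1, h2]

theorem stmt_3 (L : ℕ) (hL : 3 ≤ L) (lam : ℝ) (hlam : 0 < lam)
    (a : Fin L → ℝ) (ha01 : ∀ i, a i = 0 ∨ a i = 1)
    (ha2 : (Finset.univ.filter fun i => a i = 1).card = 2)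
    (v : Fin L → ℝ) (hv : ∀ i, a i = 0 → v i = 0) :
    v ⬝ᵥ (PiPh L a - lam • PiMat L).mulVec v ≤
      ((3 - 2*lam + Real.sqrt (1 + 2*lam^2))/4) * ∑ i, (v i)^2 := by
  obtain ⟨p, q, hlt, hS⟩ : ∃ p q : Fin L, p < q ∧ ∀ i, a i = 1 ↔ i = p ∨ i = q := by
    obtain ⟨p, q, hne, hS⟩ := Finset.card_eq_two.mp ha2
    have hS' : ∀ i, a i = 1 ↔ i = p ∨ i = q := by
      intro i
      have := congrArg (fun s => i ∈ s) hS
      simpa using this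
    rcases lt_or_gt_of_ne hne with h | h
    · exact ⟨p, q, h, hS'⟩
    · exact ⟨q, p, h, fun i => (hS' i).trans or_comm⟩
  have hne : p ≠ q := ne_of_lt hlt
  have ha : ∀ i, a i = if (i : ℕ) = p ∨ (i : ℕ) = q then 1 else 0 := by
    intro i
    have := hS i
    simp only [Fin.ext_iff] at this
    split_ifs with h
    · exact this.mpr h
    · exact (ha01 i).resolve_right (fun h' => h (this.mp h'))
  have hv0 : ∀ i, i ≠ p → i ≠ q → v i = 0 := by
    intro i h1 h2
    apply hv
    rw [ha, if_neg]
    simp only [← Fin.ext_iff]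
    tauto
  rw [form_eq_pair hne _ v hv0,
    sum_eq_pair hne (fun i => v i ^ 2) (fun i h1 h2 => by simp [hv0 i h1 h2])]
  have hqL := q.isLt
  have hlt' : (p : ℕ) < q := hlt
  have hqp : q ≠ p := hne.symm
  by_cases hadj : (q : ℕ) = p + 1
  · simp only [Matrix.sub_apply, Matrix.smul_apply, PiPh, PiMat, Matrix.diagonal_apply_eq,
      Matrix.diagonal_apply_ne _ hne, Matrix.diagonal_apply_ne _ hqp, Matrix.of_apply, ha,
      smul_eq_mul]
    generalize v p = x
    generalize v q = y
    generalize (p : ℕ) = m at *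
    generalize (q : ℕ) = n at *
    subst hadj
    by_cases h0 : m = 0
    · subst h0
      have e := edge_bound lam x y
      have : 1 < L := by omega
      have : ¬ (1 = L - 1) := by omega
      have : 0 < L := by omega
      convert e using 1
      simp [*]
      ring
    · by_cases h1 : m + 1 = L - 1
      · have e := edge_bound lam y x
        have hm : m = L - 2 := by omega
        obtain ⟨k, rfl⟩ : ∃ k, L = k + 3 := ⟨L - 3, by omega⟩
        obtain rfl : m = k + 1 := by omega
        have : ¬ (k = k + 1 + 1) := by omega
        rw [add_comm (x ^ 2)]
        convert e using 1
        simp [this]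
        ring
      · have e := bulk_bound lam x y hlam
        obtain ⟨k, rfl⟩ : ∃ k, m = k + 1 := ⟨m - 1, by omega⟩
        have : k < L := by omega
        have : k + 1 < L := by omega
        have : k + 1 + 1 + 1 < L := by omega
        have : ¬ (k + 1 = L - 1) := by omega
        have : ¬ (k + 1 = L - 2) := by omega
        have : ¬ (k = k + 1 + 1) := by omega
        have : ¬ (k + 1 + 1 = k) := by omega
        convert e using 1
        simp [*]
        ring
  · have hp : PiPh L a p p = 0 := piPh_diag_eq_zero hL a p (fun j hj => by
      rw [ha, if_neg (by omega)])
    have hq : PiPh L a q q = 0 := piPh_diag_eq_zero hL a q (fun j hj => by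
      rw [ha, if_neg (by omega)])
    have hd : ∀ i, PiMat L i i = 1 / 2 := fun i => by simp [PiMat]
    have e := far_bound lam (v p) (v q)
    simp only [Matrix.sub_apply, Matrix.smul_apply, smul_eq_mul, hp, hq, hd,
      piMat_eq_zero p q (by omega) (by omega) (by omega),
      piMat_eq_zero q p (by omega) (by omega) (by omega)]
    simp only [PiPh, Matrix.diagonal_apply_ne _ hne, Matrix.diagonal_apply_ne _ hqp]
    linarith
end

section
/- For every integer L ≥ 3, the matrix Π is positive semidefinite, i.e., vᵀΠv ≥ 0 for every v ∈ ℝ^L. -/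
/-!
The vector `u = (1, √2, …, √2, 1)` is positive and lies in the kernel of `Π` (`PiMat_mul_kerVec`),
and the off-diagonal entries of `Π` are nonpositive. For a symmetric matrix `A` with a positive
kernel vector `u`,
`vᵀ A v = -½ ∑ i j, A i j * u i * u j * (v i / u i - v j / u j)²`,
so nonpositive off-diagonal entries make the form nonnegative (`quadForm_nonneg_of_kernel`).
-/

open Matrix

/-- The ground-state representation: a symmetric matrix with nonpositive off-diagonal entries and a
positive kernel vector has a nonnegative quadratic form. -/
lemma quadForm_nonneg_of_kernel {ι : Type*} [Fintype ι] (A : Matrix ι ι ℝ) (u v : ι → ℝ)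
    (hsymm : ∀ i j, A i j = A j i) (hoff : ∀ i j, i ≠ j → A i j ≤ 0)
    (hu : ∀ i, 0 < u i) (hker : ∀ i, ∑ j, A i j * u j = 0) :
    0 ≤ v ⬝ᵥ A.mulVec v := by
  have hrow : ∑ i, ∑ j, A i j * u j * (v i ^ 2 / u i) = 0 := by
    refine Finset.sum_eq_zero fun i _ => ?_
    rw [← Finset.sum_mul, hker i, zero_mul]
  have hcol : ∑ i, ∑ j, A i j * u i * (v j ^ 2 / u j) = 0 := by
    rw [Finset.sum_comm, ← hrow]
    refine Finset.sum_congr rfl fun i _ => Finset.sum_congr rfl fun j _ => ?_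
    rw [hsymm]
  have hform : v ⬝ᵥ A.mulVec v = ∑ i, ∑ j, v i * A i j * v j := by
    simp only [dotProduct, mulVec, Finset.mul_sum, mul_assoc]
  have hnonneg : 0 ≤ ∑ i, ∑ j, -(A i j * u i * u j * (v i / u i - v j / u j) ^ 2) := by
    refine Finset.sum_nonneg fun i _ => Finset.sum_nonneg fun j _ => ?_
    by_cases h : i = j
    · subst h; simp
    · have h1 := mul_nonneg (mul_nonneg (mul_nonneg (neg_nonneg.2 (hoff i j h)) (hu i).le)
        (hu j).le) (sq_nonneg (v i / u i - v j / u j))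
      linarith
  have hexp : ∑ i, ∑ j, -(A i j * u i * u j * (v i / u i - v j / u j) ^ 2) =
      2 * (∑ i, ∑ j, v i * A i j * v j) - (∑ i, ∑ j, A i j * u j * (v i ^ 2 / u i))
        - ∑ i, ∑ j, A i j * u i * (v j ^ 2 / u j) := by
    simp only [Finset.mul_sum, ← Finset.sum_sub_distrib]
    refine Finset.sum_congr rfl fun i _ => Finset.sum_congr rfl fun j _ => ?_
    have hi := (hu i).ne'
    have hj := (hu j).ne'
    field_simp
    ring
  rw [hform]
  linarith

/-- The kernel vector `(1, √2, …, √2, 1)` of `Π`, as a function of the 0-based index. -/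
noncomputable def kerVec (L k : ℕ) : ℝ := if k = 0 ∨ k + 1 = L then 1 else √2

/-- The product of each neighbour entry in row `k` of `Π` with the kernel vector, up to sign; it
depends only on whether the row is a boundary row. -/
noncomputable def nbrVal (L k : ℕ) : ℝ := if k = 0 ∨ k + 1 = L then 1 / 2 else √2 / 4

lemma neg_one_div_two_sqrt_two : -1 / (2 * √2) = -(√2 / 4) := by
  have h : √2 * √2 = 2 := Real.mul_self_sqrt (by norm_num)
  have h0 : √2 ≠ 0 := by positivity
  field_simp
  linarith

lemma PiMat_apply_mul_kerVec (L : ℕ) (hL : 3 ≤ L) (i j : Fin L) :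
    PiMat L i j * kerVec L j =
      (if (j : ℕ) = i then kerVec L i / 2 else 0) - (if (j : ℕ) = i + 1 then nbrVal L i else 0)
        - (if (j : ℕ) + 1 = i then nbrVal L i else 0) := by
  have h : √2 * √2 = 2 := Real.mul_self_sqrt (by norm_num)
  obtain ⟨i, hi⟩ := i
  obtain ⟨j, hj⟩ := j
  simp only [PiMat, Matrix.of_apply, neg_one_div_two_sqrt_two, kerVec, nbrVal]
  split_ifs <;> first | omega | (subst_vars; linarith)

lemma PiMat_mul_kerVec (L : ℕ) (hL : 3 ≤ L) (i : Fin L) :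
    ∑ j : Fin L, PiMat L i j * kerVec L j = 0 := by
  obtain ⟨i, hi⟩ := i
  simp only [PiMat_apply_mul_kerVec L hL]
  rw [Fin.sum_univ_eq_sum_range (fun j => (if j = i then kerVec L i / 2 else 0)
    - (if j = i + 1 then nbrVal L i else 0) - (if j + 1 = i then nbrVal L i else 0)) L]
  simp only [Finset.sum_sub_distrib]
  rw [Finset.sum_ite_eq', Finset.sum_ite_eq']
  rcases i with _ | i
  · have h1 : 1 < L := by omega
    simp [kerVec, nbrVal, hi, h1]
  · simp only [Nat.add_right_cancel_iff, Finset.sum_ite_eq', Finset.mem_range, kerVec, nbrVal,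
      Nat.succ_ne_zero, false_or]
    split_ifs <;> first | omega | ring

theorem stmt_4 (L : ℕ) (hL : 3 ≤ L) (v : Fin L → ℝ) :
    0 ≤ v ⬝ᵥ (PiMat L).mulVec v := by
  refine quadForm_nonneg_of_kernel (PiMat L) (fun i => kerVec L i) v ?_ ?_ ?_
    (PiMat_mul_kerVec L hL)
  · intro i j
    simp only [PiMat, Matrix.of_apply]
    split_ifs <;> first | rfl | omega
  · intro i j hij
    have hij' : (i : ℕ) ≠ j := fun h => hij (Fin.ext h)
    have h0 : 0 ≤ √2 := Real.sqrt_nonneg 2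
    simp only [PiMat, Matrix.of_apply, neg_one_div_two_sqrt_two, if_neg hij']
    split_ifs <;> linarith
  · intro i
    simp only [kerVec]
    split_ifs <;> positivity
end

section
/- For every integer L ≥ 3, the kernel of Π is one-dimensional and is spanned by the vector ψ ∈ ℝ^L with ψ₁ = ψ_L = 1/√2 and ψ_i = 1 for 2 ≤ i ≤ L−1; that is, Πv = 0 if and only if v is a scalar multiple of ψ. -/
/-!
Writing `v = ψ · u` entrywise (possible since `ψ` has no zero entry) turns `Π` into a discrete
Laplacian of the path: an interior row of `Π v` is `(2 uᵢ - uᵢ₋₁ - uᵢ₊₁) / 4`, because the weight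
`-1/(2√2)` of a boundary edge times the boundary value `1/√2` of `ψ` is `-1/4`, and the first and
last rows are multiples of the difference of `u` along the boundary edge. Constant `u` is therefore
in the kernel, giving one direction; conversely the first row gives `u₀ = u₁` and the interior rows
propagate this along the path, so `u` is constant. The rows are computed in `row_first`,
`row_last` and `row_mid`.
-/

open Matrix

/-- The vector `ψ` with `ψ₁ = ψ_L = 1/√2` and `ψ_i = 1` otherwise. -/
noncomputable def psiVec (L : ℕ) : Fin L → ℝ :=
  fun i => if (i : ℕ) = 0 ∨ (i : ℕ) = L - 1 then 1/Real.sqrt 2 else 1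

/-- Scaling the columns of `Π` by `ψ` removes the square roots from every interior row. -/
lemma entry_mid {L i : ℕ} (hi : i + 2 < L) (j : Fin L) :
    PiMat L ⟨i + 1, by omega⟩ j * psiVec L j =
      if (j : ℕ) = i + 1 then 1 / 2
      else if (j : ℕ) = i ∨ (j : ℕ) = i + 2 then -1 / 4 else 0 := by
  have h2 : Real.sqrt 2 * Real.sqrt 2 = 2 := Real.mul_self_sqrt (by norm_num)
  have key : -1 / (2 * Real.sqrt 2) * (1 / Real.sqrt 2) = -1 / 4 := by
    rw [div_mul_div_comm, mul_assoc, h2]; norm_num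
  have hj := j.isLt
  simp only [PiMat, psiVec, Matrix.of_apply]
  split_ifs <;> first | (exfalso; grind) | exact key | norm_num

lemma row_mid {L i : ℕ} (hi : i + 2 < L) (u : ℕ → ℝ) :
    (PiMat L).mulVec (fun k => psiVec L k * u k) ⟨i + 1, by omega⟩ =
      (2 * u (i + 1) - u i - u (i + 2)) / 4 := by
  simp only [Matrix.mulVec, dotProduct, ← mul_assoc, entry_mid hi]
  rw [Fin.sum_univ_eq_sum_range (fun j : ℕ =>
    (if j = i + 1 then (1 / 2 : ℝ) else if j = i ∨ j = i + 2 then -1 / 4 else 0) * u j) L,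
    ← Finset.sum_subset (s₁ := {i, i + 1, i + 2})]
  · rw [Finset.sum_insert (by simp), Finset.sum_insert (by simp), Finset.sum_singleton]
    simp
    ring
  · intro x hx
    simp at hx ⊢
    omega
  · intro x _ hx
    simp at hx
    simp [hx]

lemma row_first {L : ℕ} (hL : 3 ≤ L) (u : ℕ → ℝ) :
    (PiMat L).mulVec (fun k => psiVec L k * u k) ⟨0, by omega⟩ =
      1 / (2 * Real.sqrt 2) * (u 0 - u 1) := by
  simp only [Matrix.mulVec, dotProduct]
  rw [Fintype.sum_eq_add (⟨0, by omega⟩ : Fin L) ⟨1, by omega⟩ (by simp)]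
  · have h : ¬ 1 = L - 1 := by omega
    simp [PiMat, psiVec, h]
    ring
  · rintro x ⟨h0, h1⟩
    have h0' : (x : ℕ) ≠ 0 := fun h => h0 (Fin.ext h)
    have h1' : (x : ℕ) ≠ 1 := fun h => h1 (Fin.ext h)
    simp only [PiMat, Matrix.of_apply]
    split_ifs <;> first | (exfalso; grind) | simp

lemma row_last {L : ℕ} (hL : 3 ≤ L) (u : ℕ → ℝ) :
    (PiMat L).mulVec (fun k => psiVec L k * u k) ⟨L - 1, by omega⟩ =
      1 / (2 * Real.sqrt 2) * (u (L - 1) - u (L - 2)) := by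
  simp only [Matrix.mulVec, dotProduct]
  rw [Fintype.sum_eq_add (⟨L - 1, by omega⟩ : Fin L) ⟨L - 2, by omega⟩
    (by simp only [ne_eq, Fin.mk.injEq]; omega)]
  · simp only [PiMat, psiVec, Matrix.of_apply]
    split_ifs <;> first | (exfalso; grind) | ring1
  · rintro x ⟨h0, h1⟩
    have h0' : (x : ℕ) ≠ L - 1 := fun h => h0 (Fin.ext h)
    have h1' : (x : ℕ) ≠ L - 2 := fun h => h1 (Fin.ext h)
    have hx := x.isLt
    simp only [PiMat, Matrix.of_apply]
    split_ifs <;> first | (exfalso; grind) | simp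

lemma psiVec_ne_zero {L : ℕ} (i : Fin L) : psiVec L i ≠ 0 := by
  unfold psiVec
  split_ifs <;> simp

theorem stmt_5 (L : ℕ) (hL : 3 ≤ L) (v : Fin L → ℝ) :
    (PiMat L).mulVec v = 0 ↔ ∃ c : ℝ, v = c • psiVec L := by
  constructor
  · intro h
    -- the quotient `v / ψ`, extended by `0` outside the index range
    obtain ⟨u, hu⟩ : ∃ u : ℕ → ℝ, v = fun k : Fin L => psiVec L k * u k := by
      refine ⟨fun n => if hn : n < L then v ⟨n, hn⟩ / psiVec L ⟨n, hn⟩ else 0, ?_⟩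
      funext k
      simp [mul_div_cancel₀, psiVec_ne_zero]
    rw [hu] at h
    have h01 : u 0 = u 1 := by
      have h0 := congrFun h ⟨0, by omega⟩
      rw [row_first hL] at h0
      have hs : 1 / (2 * Real.sqrt 2) ≠ 0 := by positivity
      exact sub_eq_zero.mp ((mul_eq_zero.mp h0).resolve_left hs)
    have hconst : ∀ n, n + 1 < L → u n = u 0 ∧ u (n + 1) = u 0 := by
      intro n
      induction n with
      | zero => exact fun _ => ⟨rfl, h01.symm⟩
      | succ n ih =>
        intro hn
        obtain ⟨ha, hb⟩ := ih (by omega)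
        have hr := congrFun h ⟨n + 1, by omega⟩
        rw [row_mid hn, Pi.zero_apply] at hr
        exact ⟨hb, by linarith⟩
    refine ⟨u 0, ?_⟩
    rw [hu]
    funext k
    have hk : u k = u 0 := by
      rcases Nat.eq_zero_or_pos (k : ℕ) with h0 | h0
      · rw [h0]
      · have := (hconst (k - 1) (by omega)).2
        rwa [Nat.sub_add_cancel h0] at this
    simp [hk, mul_comm]
  · rintro ⟨c, rfl⟩
    have hc : c • psiVec L = fun k : Fin L => psiVec L k * (fun _ : ℕ => c) k := by
      funext k
      simp [mul_comm]
    rw [hc]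
    funext ⟨i, hi⟩
    rcases Nat.eq_zero_or_pos i with rfl | h0
    · rw [row_first hL (fun _ => c)]; simp
    · obtain ⟨i, rfl⟩ := Nat.exists_eq_add_of_lt h0
      rcases Nat.lt_or_ge (i + 2) L with h2 | h2
      · have := row_mid h2 (fun _ => c)
        simp only [zero_add]
        rw [this, Pi.zero_apply]; ring
      · obtain rfl : L = i + 2 := by omega
        have := row_last hL (fun _ => c)
        simp only [zero_add]
        refine this.trans ?_
        simp
end

section
/- For every real λ > 0, the largest eigenvalue μ of the 3×3 real symmetric matrix M(λ) with entries M₁₁ = M₂₂ = 1 − λ/2, M₃₃ = (1 − λ)/2, M₁₂ = M₂₁ = λ/(2√2), M₂₃ = M₃₂ = λ/4, M₁₃ = M₃₁ = 0 equals x*/4, where x* is the largest real root of the cubic equation x³ + (6λ − 10)x² + (9λ² − 40λ + 32)x + (2λ³ − 32λ² + 64λ − 32) = 0. -/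
noncomputable def M3 (l : ℝ) : Matrix (Fin 3) (Fin 3) ℝ :=
  !![1 - l/2, l/(2*Real.sqrt 2), 0;
     l/(2*Real.sqrt 2), 1 - l/2, l/4;
     0, l/4, (1 - l)/2]

/-- The cubic `x³ + (6λ − 10)x² + (9λ² − 40λ + 32)x + (2λ³ − 32λ² + 64λ − 32)`. -/
def cubic (l x : ℝ) : ℝ :=
  x^3 + (6*l - 10)*x^2 + (9*l^2 - 40*l + 32)*x + (2*l^3 - 32*l^2 + 64*l - 32)

lemma det_M3_sub_smul (l μ : ℝ) :
    64 * (M3 l - μ • (1 : Matrix (Fin 3) (Fin 3) ℝ)).det = - cubic l (4 * μ) := by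
  -- The square root enters the determinant only through the square of the (1,2) entry.
  have hs : (l / (2 * Real.sqrt 2)) ^ 2 = l ^ 2 / 8 := by
    rw [div_pow, mul_pow, Real.sq_sqrt (by norm_num)]
    norm_num
  rw [Matrix.det_fin_three]
  simp only [M3, cubic, Matrix.sub_apply, Matrix.smul_apply, Matrix.one_apply, Matrix.of_apply,
    Matrix.cons_val, smul_eq_mul, Fin.isValue, Fin.reduceEq, if_true, if_false]
  linear_combination (-64 * ((1 - l) / 2 - μ)) * hs

lemma eigenvalue_M3_iff (l μ : ℝ) :
    (∃ v : Fin 3 → ℝ, v ≠ 0 ∧ (M3 l).mulVec v = μ • v) ↔ cubic l (4 * μ) = 0 := by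
  have hdet := det_M3_sub_smul l μ
  have hker := Matrix.exists_mulVec_eq_zero_iff
    (M := M3 l - μ • (1 : Matrix (Fin 3) (Fin 3) ℝ))
  simp only [Matrix.sub_mulVec, Matrix.smul_mulVec, Matrix.one_mulVec, sub_eq_zero] at hker
  rw [hker]
  constructor <;> intro h <;> linarith

theorem stmt_9 (l : ℝ) (hl : 0 < l) (xstar : ℝ)
    (hroot : cubic l xstar = 0) (hmax : ∀ x : ℝ, xstar < x → cubic l x ≠ 0) :
    IsMaxEigenvalue (M3 l) (xstar/4) := by
  refine ⟨(eigenvalue_M3_iff l _).2 ?_, fun μ' hμ' => ?_⟩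
  · rwa [mul_div_cancel₀ xstar four_ne_zero]
  · by_contra! hlt
    exact hmax (4 * μ') (by linarith) ((eigenvalue_M3_iff l μ').1 hμ')
end

section
/- Let L ≥ 5 be an integer and λ > 0 a real number, and let μ(λ) denote the largest eigenvalue of the 3×3 real symmetric matrix M(λ) with entries M₁₁ = M₂₂ = 1 − λ/2, M₃₃ = (1 − λ)/2, M₁₂ = M₂₁ = λ/(2√2), M₂₃ = M₃₂ = λ/4, M₁₃ = M₃₁ = 0. Then for every a ∈ {0,1}^L with exactly three ones and every vector v ∈ ℝ^L such that v_i = 0 whenever a_i = 0, one has vᵀ(Π^{ph}_a − λΠ)v ≤ μ(λ)·‖v‖². -/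
/-!
Let `p < q < r` be the three sites where `a` equals `1`. On vectors supported on these sites the
form `Π^{ph}_a - λΠ` is given by a `3 × 3` tridiagonal matrix, whose diagonal entries are
`d - λ/2` with `d ≤ 1` and whose off-diagonal entries are `λ e` with `0 ≤ e ≤ 1/(2√2)`. Either end
of the triple is favourable (`d > 1/2` for the outer site, or `e > 1/4` for the outer edge) only
if that end is the pair `{1, 2}` or the pair `{L-1, L}`; for `L ≥ 5` the two ends cannot both be
so. Hence, after reversing the triple if necessary, the `3 × 3` matrix is dominated
entrywise by `M(λ)`, and the form at `v` is at most the form of `M(λ)` at `|v|`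
(`form_le_of_dominated`), which is at most `μ(λ) ‖v‖²` by the spectral theorem
(`form_le_of_isMaxEigenvalue`).
-/

open Matrix

/-- The Rayleigh bound for `M(λ)`, written in coordinates. It holds because every eigenvalue of
the symmetric matrix `μ • 1 - M(λ)` is nonnegative. -/
lemma form_le_of_isMaxEigenvalue {l μ : ℝ} (h : IsMaxEigenvalue (M3 l) μ) (x y z : ℝ) :
    (1 - l/2) * x^2 + (1 - l/2) * y^2 + (1 - l)/2 * z^2
      + 2 * (l/(2*Real.sqrt 2)) * (x*y) + 2 * (l/4) * (y*z) ≤ μ * (x^2 + y^2 + z^2) := by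
  have hH : (μ • (1 : Matrix (Fin 3) (Fin 3) ℝ) - M3 l).IsHermitian := by
    ext i j
    fin_cases i <;> fin_cases j <;> simp [M3]
  have hP : (μ • (1 : Matrix (Fin 3) (Fin 3) ℝ) - M3 l).PosSemidef := by
    rw [hH.posSemidef_iff_eigenvalues_nonneg]
    intro i
    have h1 := hH.mulVec_eigenvectorBasis i
    have hne : (hH.eigenvectorBasis i).ofLp ≠ 0 := by
      intro h0
      apply hH.eigenvectorBasis.orthonormal.ne_zero i
      ext j
      exact congrFun h0 j
    have h2 := h.2 (μ - hH.eigenvalues i) ⟨_, hne, by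
      rw [Matrix.sub_mulVec, Matrix.smul_mulVec, Matrix.one_mulVec] at h1
      rw [sub_smul, ← h1]
      abel⟩
    simp only [Pi.zero_apply]
    linarith
  have h3 := hP.dotProduct_mulVec_nonneg ![x, y, z]
  simp [Matrix.mulVec, dotProduct, Fin.sum_univ_three, M3, Matrix.one_apply] at h3
  nlinarith [h3]

/-- A tridiagonal `3 × 3` form dominated entrywise by `M(λ)` satisfies the Rayleigh bound
with the same constant `μ`. -/
lemma form_le_of_dominated {l μ : ℝ} (hl : 0 < l) (h : IsMaxEigenvalue (M3 l) μ)
    {d₁ d₂ d₃ e₁ e₂ : ℝ} (h₁ : d₁ ≤ 1) (h₂ : d₂ ≤ 1) (h₃ : d₃ ≤ 1/2)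
    (e₁0 : 0 ≤ e₁) (he₁ : e₁ ≤ 1/(2*Real.sqrt 2)) (e₂0 : 0 ≤ e₂) (he₂ : e₂ ≤ 1/4) (x y z : ℝ) :
    (d₁ - l/2) * x^2 + (d₂ - l/2) * y^2 + (d₃ - l/2) * z^2
      + 2 * (l * e₁) * (x*y) + 2 * (l * e₂) * (y*z) ≤ μ * (x^2 + y^2 + z^2) := by
  have hM := form_le_of_isMaxEigenvalue h |x| |y| |z|
  simp only [sq_abs, ← abs_mul] at hM
  refine le_trans ?_ hM
  have a1 : d₁ * x^2 ≤ 1 * x^2 := by gcongr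
  have a2 : d₂ * y^2 ≤ 1 * y^2 := by gcongr
  have a3 : d₃ * z^2 ≤ 1/2 * z^2 := by gcongr
  have b1 : (l * e₁) * (x*y) ≤ (l * (1/(2*Real.sqrt 2))) * |x*y| :=
    (mul_le_mul_of_nonneg_left (le_abs_self _) (by positivity)).trans (by gcongr)
  have b2 : (l * e₂) * (y*z) ≤ (l * (1/4)) * |y*z| :=
    (mul_le_mul_of_nonneg_left (le_abs_self _) (by positivity)).trans (by gcongr)
  have hc : l/(2*Real.sqrt 2) = l * (1/(2*Real.sqrt 2)) := by ring
  rw [hc]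
  linarith

/-- The end edges of `Π` carry the larger weight. -/
lemma quarter_le_end_weight : (1/4 : ℝ) ≤ 1/(2*Real.sqrt 2) := by
  have h2 : Real.sqrt 2 ≤ 2 := by
    rw [Real.sqrt_le_left (by norm_num)]; norm_num
  have h0 : 0 < Real.sqrt 2 := by positivity
  gcongr
  linarith

lemma PiMat_symm (L : ℕ) (i j : Fin L) : PiMat L i j = PiMat L j i := by
  simp only [PiMat, Matrix.of_apply]
  congr 1
  · exact propext eq_comm
  · congr 1
    · exact propext or_comm
    · congr 1
      exact propext or_comm

lemma PiMat_diag (L : ℕ) (i : Fin L) : PiMat L i i = 1/2 := by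
  simp [PiMat]

lemma PiMat_far {L : ℕ} {i j k : Fin L} (hij : i < j) (hjk : j < k) : PiMat L i k = 0 := by
  have h1 : (i : ℕ) < j := hij
  have h2 : (j : ℕ) < k := hjk
  simp only [PiMat, Matrix.of_apply]
  rw [if_neg (by omega), if_neg (by omega), if_neg (by omega)]

lemma PiMat_nonpos {L : ℕ} {i j : Fin L} (hij : i < j) : 0 ≤ -PiMat L i j := by
  have h1 : (i : ℕ) < j := hij
  simp only [PiMat, Matrix.of_apply]
  rw [if_neg (by omega)]
  have : (0:ℝ) ≤ 1/(2*Real.sqrt 2) := by positivity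
  split_ifs <;> first | (rw [neg_div]; linarith) | norm_num

lemma PiMat_ge {L : ℕ} {i j : Fin L} (hij : i < j) : -PiMat L i j ≤ 1/(2*Real.sqrt 2) := by
  have h1 : (i : ℕ) < j := hij
  simp only [PiMat, Matrix.of_apply]
  rw [if_neg (by omega)]
  have := quarter_le_end_weight
  split_ifs <;> first | (rw [neg_div]; linarith) | linarith

lemma PiMat_ge_inner {L : ℕ} {i j : Fin L} (hij : i < j) (h0 : ¬ ((i : ℕ) = 0 ∧ (j : ℕ) = 1))
    (hL : ¬ ((i : ℕ) = L - 2 ∧ (j : ℕ) = L - 1)) : -PiMat L i j ≤ 1/4 := by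
  have h1 : (i : ℕ) < j := hij
  simp only [PiMat, Matrix.of_apply]
  rw [if_neg (by omega), if_neg (by omega)]
  split_ifs <;> norm_num

theorem stmt_10 (L : ℕ) (hL : 5 ≤ L) (lam : ℝ) (hlam : 0 < lam)
    (μ : ℝ) (hμ : IsMaxEigenvalue (M3 lam) μ)
    (a : Fin L → ℝ) (ha01 : ∀ i, a i = 0 ∨ a i = 1)
    (ha3 : (Finset.univ.filter fun i => a i = 1).card = 3)
    (v : Fin L → ℝ) (hv : ∀ i, a i = 0 → v i = 0) :
    v ⬝ᵥ (PiPh L a - lam • PiMat L).mulVec v ≤ μ * ∑ i, (v i)^2 := by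
  obtain ⟨p, q, r, hpq, hqr, hS⟩ : ∃ p q r : Fin L, p < q ∧ q < r ∧
      ∀ i, a i = 1 ↔ i = p ∨ i = q ∨ i = r := by
    let f := Finset.orderEmbOfFin _ ha3
    refine ⟨f 0, f 1, f 2, f.strictMono (by decide), f.strictMono (by decide), fun i => ?_⟩
    have hr := Finset.range_orderEmbOfFin _ ha3
    have : i ∈ Set.range f ↔ a i = 1 := by
      rw [hr]; simp
    rw [← this]
    simp [Set.mem_range, Fin.exists_fin_succ, eq_comm]
  have hpq' : (p : ℕ) < q := hpq
  have hqr' : (q : ℕ) < r := hqr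
  have hrL := r.isLt
  have hv0 : ∀ i, i ∉ ({p, q, r} : Finset (Fin L)) → v i = 0 := by
    intro i hi
    apply hv
    rcases ha01 i with h | h
    · exact h
    · rw [hS] at h
      simp at hi
      tauto
  have hsum : ∀ g : Fin L → ℝ, (∀ i, v i = 0 → g i = 0) → ∑ i, g i = g p + g q + g r := by
    intro g hg
    rw [← Finset.sum_subset (Finset.subset_univ {p, q, r}) (fun i _ hi => hg i (hv0 i hi)),
      Finset.sum_insert (by simp [hpq.ne, (hpq.trans hqr).ne]),
      Finset.sum_insert (by simp [hqr.ne]), Finset.sum_singleton]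
    ring
  -- the extension of `a` by zero that occurs in `PiPh`
  set a' : ℕ → ℝ := fun k => if h : k < L then a ⟨k, h⟩ else 0 with ha'
  have a'_le : ∀ k, a' k ≤ 1 := by
    intro k
    simp only [ha']
    split_ifs with h
    · rcases ha01 ⟨k, h⟩ with h | h <;> simp [h]
    · norm_num
  have a'_zero : ∀ k : ℕ, k ≠ p → k ≠ q → k ≠ r → a' k = 0 := by
    intro k h1 h2 h3
    simp only [ha']
    split_ifs with h
    · rcases ha01 ⟨k, h⟩ with h' | h'
      · exact h'
      · rw [hS] at h'
        simp only [Fin.ext_iff] at h'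
        omega
    · rfl
  obtain ⟨d, hd⟩ : ∃ d : Fin L → ℝ, d = fun i : Fin L => if (i : ℕ) = 0 then a' 1
    else if (i : ℕ) = L - 1 then a' (L - 2)
    else (a' ((i : ℕ) - 1) + a' ((i : ℕ) + 1)) / 2 := ⟨_, rfl⟩
  have hPh : PiPh L a = Matrix.diagonal d := by rw [hd]; rfl
  have d_le : ∀ i, d i ≤ 1 := by
    intro i
    simp only [hd]
    split_ifs
    · exact a'_le _
    · exact a'_le _
    · linarith [a'_le ((i : ℕ) - 1), a'_le ((i : ℕ) + 1)]
  have key : v ⬝ᵥ (PiPh L a - lam • PiMat L).mulVec v =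
      (d p - lam/2) * (v p)^2 + (d q - lam/2) * (v q)^2 + (d r - lam/2) * (v r)^2
      + 2 * (lam * (-PiMat L p q)) * (v p * v q) + 2 * (lam * (-PiMat L q r)) * (v q * v r) := by
    simp only [dotProduct, Matrix.mulVec]
    rw [hsum _ (fun i hi => by simp [hi])]
    rw [hsum _ (fun i hi => by simp [hi]), hsum _ (fun i hi => by simp [hi]),
      hsum _ (fun i hi => by simp [hi])]
    simp only [hPh, Matrix.sub_apply, Matrix.smul_apply, Matrix.diagonal_apply_eq, PiMat_diag,
      Matrix.diagonal_apply_ne _ hpq.ne, Matrix.diagonal_apply_ne _ hqr.ne,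
      Matrix.diagonal_apply_ne _ hpq.ne', Matrix.diagonal_apply_ne _ hqr.ne',
      Matrix.diagonal_apply_ne _ (hpq.trans hqr).ne, Matrix.diagonal_apply_ne _ (hpq.trans hqr).ne',
      PiMat_symm L q p, PiMat_symm L r q, PiMat_symm L r p, PiMat_far hpq hqr, smul_eq_mul]
    ring
  rw [key, hsum _ (fun i hi => by simp [hi])]
  by_cases hend : (q : ℕ) = L - 2 ∧ (r : ℕ) = L - 1
  · -- the triple ends at the right boundary, so its left end is not the pair of first sites
    have hdp : d p ≤ 1/2 := by
      simp only [hd]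
      split_ifs
      · rw [a'_zero 1 (by omega) (by omega) (by omega)]; norm_num
      · omega
      · rw [a'_zero (p - 1) (by omega) (by omega) (by omega)]
        linarith [a'_le ((p : ℕ) + 1)]
    have := form_le_of_dominated hlam hμ (d_le r) (d_le q) hdp (PiMat_nonpos hqr) (PiMat_ge hqr)
      (PiMat_nonpos hpq) (PiMat_ge_inner hpq (by omega) (by omega)) (v r) (v q) (v p)
    linarith
  · have hdr : d r ≤ 1/2 := by
      simp only [hd]
      split_ifs
      · omega
      · rw [a'_zero (L - 2) (by omega) (by omega) (by omega)]; norm_num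
      · rw [a'_zero (r + 1) (by omega) (by omega) (by omega)]
        linarith [a'_le ((r : ℕ) - 1)]
    exact form_le_of_dominated hlam hμ (d_le p) (d_le q) hdr (PiMat_nonpos hpq) (PiMat_ge hpq)
      (PiMat_nonpos hqr) (PiMat_ge_inner hqr (by omega) hend) (v p) (v q) (v r)
end

section
/- For every integer L ≥ 5, every real w > 0, and every real y with −1 ≤ y ≤ 1, there exists a real x > x_w such that F(L, x, w, y) = 0 and F(L, x', w, y) ≠ 0 for all real x' > x; that is, the function x ↦ F(L, x, w, y) has a largest zero and this largest zero is strictly greater than x_w. -/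
/-!
Write `a = (L-3)x`, `u = 2w cosh x` and `δ = cosh (2x) - u`. The addition formulas give
`cosh x · F = -cosh x · sinh x · sinh (a-2x) - δ (cosh (a-2x) + cosh (2x)) + δ² (1 + cosh a)
  - u δ (cosh (a y) - 1)`.
For `x > x_w` one has `δ > 0`, and `L ≥ 5` makes `a - 2x = (L-5)x ≥ 0`, so `F < 0` as soon as
`δ (1 + cosh a) < cosh (a-2x) + cosh (2x)`. This last inequality is strict at `x = x_w` (where
`δ = 0`, or `x_w = 0` and `δ = 1 - 2w < 1`), hence holds slightly to the right of `x_w`.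

On the other hand `F ≥ sinh ((L-1)x) · sinh x - 4w cosh ((L-1)x)` for `x ≥ 0`, which is positive
for all large `x`. The intermediate value theorem gives zeros to the right of `x_w`, and the set
of these zeros beyond the negative point is compact, so it has a largest element.
-/

/-- The function `F(L,x,w,y)` from the paper. -/
noncomputable def Ffun (L : ℕ) (x w y : ℝ) : ℝ :=
  (1/2)*Real.cosh ((L:ℝ)*x) - 2*w*Real.cosh (((L:ℝ)-1)*x)
    + (2*w^2 - 1/2)*Real.cosh (((L:ℝ)-2)*x) + 2*w^2*Real.cosh (((L:ℝ)-4)*x)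
    + 2*w*(2*w*Real.cosh x - Real.cosh (2*x))*Real.cosh (((L:ℝ)-3)*x*y)

open Real

/-- `F` rewritten in terms of hyperbolic functions of `x` and of `a = (L-3)x`. -/
lemma Ffun_eq (L : ℕ) (x w y : ℝ) :
    Ffun L x w y = sinh (((L:ℝ)-3)*x + 2*x) * sinh x
      + 4*w^2*cosh x*cosh (((L:ℝ)-3)*x) - 2*w*cosh (((L:ℝ)-3)*x + 2*x)
      + 2*w*(2*w*cosh x - cosh (2*x))*cosh (((L:ℝ)-3)*x*y) := by
  unfold Ffun
  generalize hb : cosh (((L:ℝ)-3)*x*y) = b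
  rw [show (L:ℝ)*x = (((L:ℝ)-3)*x + 2*x) + x by ring,
    show ((L:ℝ)-1)*x = ((L:ℝ)-3)*x + 2*x by ring,
    show ((L:ℝ)-4)*x = ((L:ℝ)-3)*x - x by ring]
  have h2 : cosh (((L:ℝ)-2)*x) = cosh ((((L:ℝ)-3)*x + 2*x) - x) := by ring_nf
  have h3 : cosh (((L:ℝ)-2)*x) = cosh (((L:ℝ)-3)*x + x) := by ring_nf
  rw [cosh_sub] at h2
  rw [cosh_add] at h3
  rw [cosh_add (((L:ℝ)-3)*x + 2*x) x, cosh_sub]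
  linear_combination (-1/2) * h2 + 2*w^2*h3

/-- The expansion of `cosh x · F` in powers of `δ = cosh (2x) - 2w cosh x`. -/
lemma cosh_mul_Ffun (L : ℕ) (x w y : ℝ) :
    cosh x * Ffun L x w y = -(cosh x * sinh x * sinh (((L:ℝ)-3)*x - 2*x))
      - (cosh (2*x) - 2*w*cosh x) * (cosh (((L:ℝ)-3)*x - 2*x) + cosh (2*x))
      + (cosh (2*x) - 2*w*cosh x)^2 * (1 + cosh (((L:ℝ)-3)*x))
      - 2*w*cosh x * (cosh (2*x) - 2*w*cosh x) * (cosh (((L:ℝ)-3)*x*y) - 1) := by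
  rw [Ffun_eq]
  generalize cosh (((L:ℝ)-3)*x*y) = b
  generalize ((L:ℝ)-3)*x = a
  rw [cosh_add, sinh_add, cosh_sub, sinh_sub, sinh_two_mul]
  have h := cosh_two_mul x
  generalize cosh (2*x) = C at *
  generalize cosh x = c at *
  generalize sinh x = s at *
  subst h
  ring

/-- To the right of `x_w` the quantity `δ` is positive. -/
lemma delta_pos {w xw x : ℝ}
    (hxw : (w ≤ 1/2 ∧ xw = 0) ∨
           (1/2 < w ∧ 0 < xw ∧ cosh (2*xw) = 2*w*cosh xw)) (hx : xw < x) :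
    0 < cosh (2*x) - 2*w*cosh x := by
  have e : ∀ t : ℝ, cosh (2*t) = 2*cosh t^2 - 1 := fun t => by
    rw [cosh_two_mul, sinh_sq]; ring
  rcases hxw with ⟨h, rfl⟩ | ⟨_, h0, h1⟩
  · have hc := one_lt_cosh.2 hx.ne'
    rw [e]
    nlinarith
  · have hlt : cosh xw < cosh x := by
      rw [cosh_lt_cosh, abs_of_pos h0, abs_of_pos (h0.trans hx)]; exact hx
    have hp := cosh_pos xw
    have hp' := cosh_pos x
    rw [e] at h1 ⊢
    have key : cosh xw * (2*cosh x^2 - 1 - 2*w*cosh x)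
        = (cosh x - cosh xw) * (2*cosh x*cosh xw + 1) := by
      linear_combination cosh x * h1
    have : 0 < cosh xw * (2*cosh x^2 - 1 - 2*w*cosh x) := by
      rw [key]
      exact mul_pos (sub_pos.2 hlt) (by positivity)
    exact pos_of_mul_pos_right this hp.le

lemma Ffun_neg {L : ℕ} (hL : 5 ≤ L) {x w : ℝ} (y : ℝ) (hw : 0 < w) (hx : 0 < x)
    (hδ : 0 < cosh (2*x) - 2*w*cosh x)
    (h : (cosh (2*x) - 2*w*cosh x) * (1 + cosh (((L:ℝ)-3)*x))
      < cosh (((L:ℝ)-3)*x - 2*x) + cosh (2*x)) : Ffun L x w y < 0 := by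
  have hL' : (5:ℝ) ≤ L := by exact_mod_cast hL
  have hs : 0 ≤ sinh (((L:ℝ)-3)*x - 2*x) := sinh_nonneg_iff.2 (by nlinarith)
  have hs' : 0 < sinh x := sinh_pos_iff.2 hx
  have hc := cosh_pos x
  have hb : 0 ≤ cosh (((L:ℝ)-3)*x*y) - 1 := sub_nonneg.2 (one_le_cosh _)
  have t1 : 0 ≤ cosh x * sinh x * sinh (((L:ℝ)-3)*x - 2*x) := by positivity
  have t2 : 0 ≤ 2*w*cosh x * (cosh (2*x) - 2*w*cosh x) * (cosh (((L:ℝ)-3)*x*y) - 1) := by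
    have := hδ.le
    positivity
  have t3 := mul_lt_mul_of_pos_left h hδ
  have hm : cosh x * Ffun L x w y < 0 := by
    rw [cosh_mul_Ffun]
    nlinarith
  exact neg_of_mul_neg_right hm hc.le

lemma exists_Ffun_neg {L : ℕ} (hL : 5 ≤ L) {w : ℝ} (y : ℝ) (hw : 0 < w) {xw : ℝ}
    (hxw : (w ≤ 1/2 ∧ xw = 0) ∨
           (1/2 < w ∧ 0 < xw ∧ cosh (2*xw) = 2*w*cosh xw)) :
    ∃ x, xw < x ∧ Ffun L x w y < 0 := by
  have h0 : 0 ≤ xw := by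
    rcases hxw with ⟨_, h⟩ | ⟨_, h, _⟩
    · exact h.ge
    · exact h.le
  have hat : (cosh (2*xw) - 2*w*cosh xw) * (1 + cosh (((L:ℝ)-3)*xw))
      < cosh (((L:ℝ)-3)*xw - 2*xw) + cosh (2*xw) := by
    rcases hxw with ⟨_, rfl⟩ | ⟨_, _, h⟩
    · simp only [mul_zero, sub_zero, cosh_zero]
      linarith
    · rw [h, sub_self, zero_mul, ← h]
      exact add_pos (cosh_pos _) (cosh_pos _)
  have hev : ∀ᶠ x in nhds xw, (cosh (2*x) - 2*w*cosh x) * (1 + cosh (((L:ℝ)-3)*x))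
      < cosh (((L:ℝ)-3)*x - 2*x) + cosh (2*x) := by
    apply ContinuousAt.eventually_lt _ _ hat <;> fun_prop
  obtain ⟨x, hx, hlt⟩ :=
    ((hev.filter_mono nhdsWithin_le_nhds).and
      (self_mem_nhdsWithin : Set.Ioi xw ∈ nhdsWithin xw (Set.Ioi xw))).exists
  exact ⟨x, hlt, Ffun_neg hL y hw (h0.trans_lt hlt) (delta_pos hxw hlt) hx⟩

lemma Ffun_pos {L : ℕ} (hL : 5 ≤ L) {x w y : ℝ} (hw : 0 < w) (hy : -1 ≤ y ∧ y ≤ 1)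
    (hx1 : 1 ≤ x) (hx : 8*w ≤ x) : 0 < Ffun L x w y := by
  have hL' : (5:ℝ) ≤ L := by exact_mod_cast hL
  rw [Ffun_eq]
  have ha : 0 ≤ ((L:ℝ)-3)*x := mul_nonneg (by linarith) (by linarith)
  have hb : cosh (((L:ℝ)-3)*x*y) ≤ cosh (((L:ℝ)-3)*x) := by
    rw [cosh_le_cosh, abs_mul]
    exact mul_le_of_le_one_right (abs_nonneg _) (abs_le.2 hy)
  have hb0 := cosh_pos (((L:ℝ)-3)*x*y)
  generalize cosh (((L:ℝ)-3)*x*y) = b at *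
  generalize ((L:ℝ)-3)*x = a at *
  have hc := cosh_pos x
  have hca := cosh_pos a
  have hc2 := cosh_pos (2*x)
  have hprod : cosh a * cosh (2*x) ≤ cosh (a + 2*x) := by
    rw [cosh_add]
    have := mul_nonneg (sinh_nonneg_iff.2 ha) (sinh_nonneg_iff.2 (by linarith : 0 ≤ 2*x))
    linarith
  have hn1 : a + 2*x < sinh (a + 2*x) := self_lt_sinh_iff.2 (by linarith)
  have hsx : x < sinh x := self_lt_sinh_iff.2 (by linarith)
  have hexp : cosh (a + 2*x) - sinh (a + 2*x) ≤ 1 := by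
    rw [cosh_sub_sinh]
    exact exp_le_one_iff.2 (by linarith)
  have h1 : cosh (a + 2*x) ≤ 2 * sinh (a + 2*x) := by linarith
  have h2 : cosh (2*x) * b ≤ cosh (a + 2*x) :=
    (mul_le_mul_of_nonneg_left hb hc2.le).trans (by linarith)
  have t1 : 0 < 4*w^2*cosh x*cosh a := by positivity
  have t2 : 0 < 4*w^2*cosh x*b := by positivity
  have t3 := mul_le_mul_of_nonneg_left h2 hw.le
  have t4 := mul_le_mul_of_nonneg_left h1 hw.le
  have t5 : 0 < sinh (a + 2*x) * (sinh x - 8*w) := mul_pos (by linarith) (by linarith)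
  nlinarith

theorem stmt_14 (L : ℕ) (hL : 5 ≤ L) (w : ℝ) (hw : 0 < w) (y : ℝ)
    (hy : -1 ≤ y ∧ y ≤ 1) (xw : ℝ)
    (hxw : (w ≤ 1/2 ∧ xw = 0) ∨
           (1/2 < w ∧ 0 < xw ∧ Real.cosh (2*xw) = 2*w*Real.cosh xw)) :
    ∃ x : ℝ, xw < x ∧ Ffun L x w y = 0 ∧ ∀ x' : ℝ, x < x' → Ffun L x' w y ≠ 0 := by
  obtain ⟨x₀, hx₀, hneg⟩ := exists_Ffun_neg hL y hw hxw
  have hcont : Continuous fun x => Ffun L x w y := by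
    unfold Ffun
    fun_prop
  set M := max x₀ (max 1 (8*w))
  have hpos : ∀ x, M ≤ x → 0 < Ffun L x w y := fun x hx =>
    Ffun_pos hL hw hy (((le_max_left _ _).trans (le_max_right _ _)).trans hx)
      (((le_max_right _ _).trans (le_max_right _ _)).trans hx)
  have hcomp : IsCompact (Set.Icc x₀ M ∩ {x | Ffun L x w y = 0}) :=
    isCompact_Icc.inter_right (isClosed_eq hcont continuous_const)
  have hne : (Set.Icc x₀ M ∩ {x | Ffun L x w y = 0}).Nonempty := by
    obtain ⟨z, hz, hz0⟩ := intermediate_value_Icc (le_max_left x₀ (max 1 (8*w)))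
      hcont.continuousOn ⟨hneg.le, (hpos M le_rfl).le⟩
    exact ⟨z, hz, hz0⟩
  obtain ⟨z, ⟨hz, hz0⟩, hmax⟩ := hcomp.exists_isGreatest hne
  refine ⟨z, hx₀.trans_le hz.1, hz0, fun x' hx' h => ?_⟩
  rcases le_total M x' with hMx | hMx
  · exact (hpos x' hMx).ne' h
  · exact absurd (hmax ⟨⟨hz.1.trans hx'.le, hMx⟩, h⟩) (not_le.2 hx')
end

section
/- Let L ≥ 5 be an integer, s ∈ {−1, 1}, m a real number with |m| ≤ (L−5)/2, w a real number, and x > 0 a real number satisfying 2w·cosh(x) < cosh(2x). Then g_s(L, x, w, m) > 0. -/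
/-!
With `u = ((L-3)/2 + s m) x`, the bound on `|m|` gives `u ≥ x`, and the claim reads
`2 w cosh u < cosh (u + x)`. The hypothesis on `w` gives `2 w < cosh (2x) / cosh x`, so it suffices
that `cosh (2x) cosh u ≤ cosh (u + x) cosh x`, which is `cosh_two_mul_mul_cosh_le`.
-/

/-- The function `g_s(L,x,w,m)` from the paper (`s ∈ {−1,1}`). -/
noncomputable def gFun (L : ℕ) (x w m s : ℝ) : ℝ :=
  Real.cosh ((((L:ℝ)-1)/2 + s*m)*x) - 2*w*Real.cosh ((((L:ℝ)-3)/2 + s*m)*x)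

/-- Addition formulas give `cosh (u + x) cosh x - cosh (2x) cosh u = sinh x sinh (u - x)`. -/
theorem cosh_two_mul_mul_cosh_le {u x : ℝ} (hx : 0 ≤ x) (hu : x ≤ u) :
    Real.cosh (2 * x) * Real.cosh u ≤ Real.cosh (u + x) * Real.cosh x := by
  have h : 0 ≤ Real.sinh x * Real.sinh (u - x) :=
    mul_nonneg (Real.sinh_nonneg_iff.2 hx) (Real.sinh_nonneg_iff.2 (sub_nonneg.2 hu))
  rw [Real.sinh_sub] at h
  rw [Real.cosh_two_mul, Real.cosh_add]
  linarith

theorem stmt_17 (L : ℕ) (hL : 5 ≤ L) (s : ℝ) (hs : s = -1 ∨ s = 1)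
    (m : ℝ) (hm : |m| ≤ ((L:ℝ)-5)/2) (w : ℝ) (x : ℝ) (hx : 0 < x)
    (hwx : 2*w*Real.cosh x < Real.cosh (2*x)) :
    0 < gFun L x w m s := by
  have ha : 1 ≤ ((L:ℝ)-3)/2 + s*m := by
    obtain ⟨h1, h2⟩ := abs_le.1 hm
    rcases hs with rfl | rfl <;> linarith
  unfold gFun
  rw [show (((L:ℝ)-1)/2 + s*m)*x = (((L:ℝ)-3)/2 + s*m)*x + x by ring]
  set u := (((L:ℝ)-3)/2 + s*m)*x
  have hu : x ≤ u := le_mul_of_one_le_left hx.le ha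
  have h1 := cosh_two_mul_mul_cosh_le hx.le hu
  -- multiply the hypothesis by `cosh u > 0`, then cancel `cosh x > 0`
  have h2 := mul_lt_mul_of_pos_right hwx (Real.cosh_pos u)
  refine sub_pos.2 (lt_of_mul_lt_mul_right ?_ (Real.cosh_pos x).le)
  linarith
end

section
/- Let L ≥ 5 be an integer, λ > 0 a real number, m₀ ∈ {2, …, L−1}, x a real number, and set α = cosh((m₀−1)x) − (2/λ)·cosh((m₀−2)x) and β = cosh((L−m₀)x) − (2/λ)·cosh((L−m₀−1)x). Define v ∈ ℝ^L by v₁ = β/√2, v_i = β·cosh((i−1)x) for 2 ≤ i ≤ m₀−1, v_{m₀} = α·β, v_i = α·cosh((L−i)x) for m₀+1 ≤ i ≤ L−1, and v_L = α/√2. Then the matrix A = Π^{ph}_{e_{m₀}} − λΠ satisfies (Av)_j = (λ(cosh(x) − 1)/2)·v_j for every j ≠ m₀, and (Av)_{m₀} = (λ(cosh(x) − 1)/2)·v_{m₀} − (λ/4)·F(L, x, 1/λ, (2m₀ − L − 1)/(L − 3)). -/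
/-!
The tridiagonal matrix `Π` is conjugated by the boundary weights `s` (`√2` at the two end sites, `1`
elsewhere) into a discrete Laplacian: if `v i = u i / s i`, then `Π v` at an interior site `j` is
`u j / 2 - (u (j-1) + u (j+1)) / 4` (`piMat_mulVec_mid`), while the end sites behave like reflecting
boundaries (`piMat_mulVec_zero`, `piMat_mulVec_last`). The profile `u` (`profile`) equals `β cosh (k x)`
to the left of the defect, `α cosh ((L - 1 - k) x)` to its right (0-based `k`) and `α β` on it.
Away from the defect the eigenvalue equation is therefore the recurrence
`cosh ((t+1) x) + cosh ((t-1) x) = 2 cosh x cosh (t x)`. On the two sites next to the defect the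
potential `Π^{ph}` contributes the extra term which the choice of `α` and `β` cancels. On the defect
itself the residual is
`(λ/4) (β cosh ((m₀-2) x) + α cosh ((L-m₀-1) x) - 2 α β cosh x)`, and `defect_identity` identifies the
bracket with `-F`.
-/

open Matrix

/-- The standard basis vector `e_m` (as a `{0,1}`-valued string). -/
def eVec (L : ℕ) (m : Fin L) : Fin L → ℝ := fun i => if i = m then 1 else 0

/-- The boundary weight: `√2` at the two end sites of the chain (0-based), `1` elsewhere. -/
noncomputable def bdryWeight (L k : ℕ) : ℝ :=
  if k = 0 ∨ k + 1 = L then Real.sqrt 2 else 1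

/-- The vector `v` of the theorem, multiplied by the boundary weights and extended to all of `ℕ`;
sites are 0-based, so the defect sits at `k + 1 = m₀`. -/
noncomputable def profile (L m₀ : ℕ) (x α β : ℝ) (k : ℕ) : ℝ :=
  if k + 1 < m₀ then β * Real.cosh ((k : ℝ) * x)
  else if k + 1 = m₀ then α * β
  else α * Real.cosh (((L : ℝ) - 1 - k) * x)

lemma sum_fin_eq_sum_subset (L : ℕ) (f : ℕ → ℝ) (s : Finset ℕ) (hs : ∀ k ∈ s, k < L)
    (h0 : ∀ k, k < L → k ∉ s → f k = 0) : ∑ i : Fin L, f i = ∑ k ∈ s, f k := by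
  rw [Fin.sum_univ_eq_sum_range]
  symm
  apply Finset.sum_subset
  · intro k hk
    exact Finset.mem_range.2 (hs k hk)
  · intro k hk hks
    exact h0 k (Finset.mem_range.1 hk) hks

/-- The entries of `Π` as a function on `ℕ × ℕ`. -/
noncomputable def piEntry (L i j : ℕ) : ℝ :=
  if i = j then 1/2
  else if (i + 1 = j ∧ (i = 0 ∨ i = L - 2)) ∨ (j + 1 = i ∧ (j = 0 ∨ j = L - 2)) then
    -1/(2*Real.sqrt 2)
  else if i + 1 = j ∨ j + 1 = i then -1/4
  else 0

lemma piEntry_far (L i j : ℕ) (h : i ≠ j) (h1 : i + 1 ≠ j) (h2 : j + 1 ≠ i) :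
    piEntry L i j = 0 := by
  simp [piEntry, h, h1, h2]

/-- Up to the boundary weight, every coupling of an interior site equals `-1/4`. -/
lemma piEntry_mid (L i j : ℕ) (hi0 : i ≠ 0) (hi : i + 1 < L) (hj : j < L)
    (h : i + 1 = j ∨ j + 1 = i) (y : ℝ) :
    piEntry L i j * (y / bdryWeight L j) = -(1/4) * y := by
  have h2 : Real.sqrt 2 ^ 2 = 2 := Real.sq_sqrt (by norm_num)
  have hne : i ≠ j := by omega
  unfold piEntry bdryWeight
  rw [if_neg hne]
  by_cases hb : j = 0 ∨ j + 1 = L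
  · rw [if_pos (by omega), if_pos hb]
    field_simp
    rw [h2]
    ring
  · rw [if_neg (by omega), if_pos h, if_neg hb]
    ring

lemma piMat_mulVec_eq (L : ℕ) (f : ℕ → ℝ) (j : Fin L) :
    (PiMat L).mulVec (fun i : Fin L => f i) j = ∑ i : Fin L, piEntry L j i * f i := rfl

lemma piMat_mulVec_mid (L : ℕ) (u : ℕ → ℝ) (j : Fin L) (hj0 : (j : ℕ) ≠ 0)
    (hj : (j : ℕ) + 1 < L) :
    (PiMat L).mulVec (fun i : Fin L => u i / bdryWeight L i) j
      = 1/2 * u j - 1/4 * (u ((j : ℕ) - 1) + u ((j : ℕ) + 1)) := by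
  rw [piMat_mulVec_eq L (fun k => u k / bdryWeight L k),
    sum_fin_eq_sum_subset L (fun k => piEntry L j k * (u k / bdryWeight L k))
      {(j : ℕ) - 1, (j : ℕ), (j : ℕ) + 1}]
  · rw [Finset.sum_insert (by simp; omega), Finset.sum_insert (by simp), Finset.sum_singleton,
      piEntry_mid L j (j - 1) hj0 hj (by omega) (by omega),
      piEntry_mid L j (j + 1) hj0 hj (by omega) (by omega)]
    have hd : piEntry L j j = 1/2 := by simp [piEntry]
    have hw : bdryWeight L j = 1 := by
      unfold bdryWeight
      rw [if_neg (by omega)]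
    rw [hd, hw]
    ring
  · intro k hk
    simp only [Finset.mem_insert, Finset.mem_singleton] at hk
    omega
  · intro k _ hk
    simp only [Finset.mem_insert, Finset.mem_singleton] at hk
    rw [piEntry_far L j k (by omega) (by omega) (by omega), zero_mul]

lemma piMat_mulVec_zero (L : ℕ) (hL : 3 ≤ L) (u : ℕ → ℝ) (j : Fin L) (hj0 : (j : ℕ) = 0) :
    (PiMat L).mulVec (fun i : Fin L => u i / bdryWeight L i) j
      = (1/2 * u 0 - 1/2 * u 1) / Real.sqrt 2 := by
  rw [piMat_mulVec_eq L (fun k => u k / bdryWeight L k),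
    sum_fin_eq_sum_subset L (fun k => piEntry L j k * (u k / bdryWeight L k)) {0, 1}]
  · rw [Finset.sum_pair (by norm_num), hj0]
    have h1 : ¬ 1 + 1 = L := by omega
    simp [piEntry, bdryWeight, h1]
    field_simp
    ring
  · intro k hk
    simp only [Finset.mem_insert, Finset.mem_singleton] at hk
    omega
  · intro k _ hk
    simp only [Finset.mem_insert, Finset.mem_singleton] at hk
    rw [piEntry_far L j k (by omega) (by omega) (by omega), zero_mul]

lemma piMat_mulVec_last (L : ℕ) (hL : 3 ≤ L) (u : ℕ → ℝ) (j : Fin L)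
    (hj : (j : ℕ) + 1 = L) :
    (PiMat L).mulVec (fun i : Fin L => u i / bdryWeight L i) j
      = (1/2 * u j - 1/2 * u ((j : ℕ) - 1)) / Real.sqrt 2 := by
  rw [piMat_mulVec_eq L (fun k => u k / bdryWeight L k),
    sum_fin_eq_sum_subset L (fun k => piEntry L j k * (u k / bdryWeight L k))
      {(j : ℕ), (j : ℕ) - 1}]
  · rw [Finset.sum_pair (by omega)]
    have hd : piEntry L j j = 1/2 := by simp [piEntry]
    have he : piEntry L j ((j : ℕ) - 1) = -1/(2*Real.sqrt 2) := by
      unfold piEntry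
      rw [if_neg (by omega), if_pos (by omega)]
    have hw : bdryWeight L j = Real.sqrt 2 := by
      unfold bdryWeight
      rw [if_pos (by omega)]
    have hw' : bdryWeight L ((j : ℕ) - 1) = 1 := by
      unfold bdryWeight
      rw [if_neg (by omega)]
    rw [hd, he, hw, hw']
    field_simp
    ring
  · intro k hk
    simp only [Finset.mem_insert, Finset.mem_singleton] at hk
    omega
  · intro k _ hk
    simp only [Finset.mem_insert, Finset.mem_singleton] at hk
    rw [piEntry_far L j k (by omega) (by omega) (by omega), zero_mul]

/-- `Π^{ph}` of a single defect at 0-based site `m` acts only on the neighbours of `m`; an end site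
has a single neighbour, which then counts with the full weight `1` instead of `1/2`. -/
lemma piPh_mulVec (L : ℕ) (hL : 3 ≤ L) (m : ℕ) (hm : m < L) (v : Fin L → ℝ) (j : Fin L) :
    (PiPh L (eVec L ⟨m, hm⟩)).mulVec v j
      = (if (j : ℕ) + 1 = m ∨ m + 1 = j then
          (if (j : ℕ) = 0 ∨ (j : ℕ) + 1 = L then 1 else 1/2) else 0) * v j := by
  unfold PiPh
  rw [Matrix.mulVec_diagonal]
  congr 1
  have hj := j.isLt
  have key : ∀ k, (if h : k < L then eVec L ⟨m, hm⟩ ⟨k, h⟩ else 0)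
      = if k = m then (1 : ℝ) else 0 := by
    intro k
    by_cases h : k < L
    · simp [h, eVec]
    · rw [dif_neg h, if_neg (by omega)]
  simp only [key]
  split_ifs <;> first | omega | norm_num

lemma cosh_recurrence (t x : ℝ) :
    Real.cosh ((t + 1) * x) + Real.cosh ((t - 1) * x) = 2 * Real.cosh x * Real.cosh (t * x) := by
  rw [add_mul, sub_mul, one_mul, Real.cosh_add, Real.cosh_sub]
  ring

/-- The right-hand side is `F`, and `-lam/4` times the left-hand side (with `w = 1/lam`) is the residual
of the eigenvalue equation at the defect; here `p = m₀ - 1` and `n = L - m₀` are the distances from the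
defect to the two ends. Both sides are Laurent polynomials in `exp x`, `exp (p x)`, `exp (n x)`. -/
lemma defect_identity (p n x w : ℝ) :
    2 * Real.cosh x * (Real.cosh (p*x) - 2*w*Real.cosh ((p-1)*x))
        * (Real.cosh (n*x) - 2*w*Real.cosh ((n-1)*x))
      - (Real.cosh (n*x) - 2*w*Real.cosh ((n-1)*x)) * Real.cosh ((p-1)*x)
      - (Real.cosh (p*x) - 2*w*Real.cosh ((p-1)*x)) * Real.cosh ((n-1)*x)
    = (1/2)*Real.cosh ((p+n+1)*x) - 2*w*Real.cosh ((p+n)*x)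
      + (2*w^2 - 1/2)*Real.cosh ((p+n-1)*x) + 2*w^2*Real.cosh ((p+n-3)*x)
      + 2*w*(2*w*Real.cosh x - Real.cosh (2*x))*Real.cosh ((p-n)*x) := by
  have e3 : (p+n-3)*x = p*x + n*x - x - x - x := by ring
  have e1 : (p-1)*x = p*x - x := by ring
  have e2 : (n-1)*x = n*x - x := by ring
  have e4 : (p+n+1)*x = p*x + n*x + x := by ring
  have e5 : (p+n)*x = p*x + n*x := by ring
  have e6 : (p+n-1)*x = p*x + n*x - x := by ring
  have e7 : (p-n)*x = p*x - n*x := by ring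
  have e8 : 2*x = x + x := by ring
  rw [e1, e2, e3, e4, e5, e6, e7, e8]
  generalize p*x = P
  generalize n*x = N
  simp only [Real.cosh_eq, neg_sub, neg_add, Real.exp_sub, Real.exp_add, Real.exp_neg]
  have hP := Real.exp_ne_zero P
  have hN := Real.exp_ne_zero N
  have hX := Real.exp_ne_zero x
  field_simp
  ring

theorem stmt_18 (L : ℕ) (hL : 5 ≤ L) (lam : ℝ) (hlam : 0 < lam)
    (m₀ : ℕ) (hm₀ : 2 ≤ m₀ ∧ m₀ ≤ L - 1) (x : ℝ) (α β : ℝ)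
    (hα : α = Real.cosh (((m₀:ℝ) - 1)*x) - (2/lam)*Real.cosh (((m₀:ℝ) - 2)*x))
    (hβ : β = Real.cosh (((L:ℝ) - m₀)*x) - (2/lam)*Real.cosh (((L:ℝ) - m₀ - 1)*x))
    (v : Fin L → ℝ)
    (hv : v = fun i : Fin L =>
      if (i : ℕ) + 1 = 1 then β / Real.sqrt 2
      else if (i : ℕ) + 1 < m₀ then β * Real.cosh ((((i : ℕ) : ℝ) + 1 - 1)*x)
      else if (i : ℕ) + 1 = m₀ then α * β
      else if (i : ℕ) + 1 < L then α * Real.cosh (((L:ℝ) - ((i : ℕ) + 1))*x)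
      else α / Real.sqrt 2)
    (A : Matrix (Fin L) (Fin L) ℝ)
    (hA : A = PiPh L (eVec L ⟨m₀ - 1, by omega⟩) - lam • PiMat L) :
    (∀ j : Fin L, (j : ℕ) + 1 ≠ m₀ →
      A.mulVec v j = (lam*(Real.cosh x - 1)/2) * v j) ∧
    (∀ j : Fin L, (j : ℕ) + 1 = m₀ →
      A.mulVec v j = (lam*(Real.cosh x - 1)/2) * v j
        - (lam/4) * Ffun L x (1/lam) ((2*(m₀:ℝ) - L - 1)/((L:ℝ) - 3))) := by
  obtain ⟨hm2, hmL⟩ := hm₀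
  have hl : lam ≠ 0 := hlam.ne'
  have hmv : ∀ j : Fin L, A.mulVec v j
      = (if (j : ℕ) + 1 = m₀ - 1 ∨ m₀ - 1 + 1 = j then
          (if (j : ℕ) = 0 ∨ (j : ℕ) + 1 = L then 1 else 1/2) else 0) * v j
        - lam * (PiMat L).mulVec v j := by
    intro j
    rw [hA, Matrix.sub_mulVec, Pi.sub_apply, piPh_mulVec L (by omega), Matrix.smul_mulVec,
      Pi.smul_apply, smul_eq_mul]
  have hvu : v = fun i : Fin L => profile L m₀ x α β i / bdryWeight L i := by
    rw [hv]
    funext i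
    have hi := i.isLt
    unfold profile bdryWeight
    by_cases h0 : (i : ℕ) = 0
    · rw [if_pos (by omega), if_pos (by omega), if_pos (by omega)]
      simp [h0]
    by_cases hlast : (i : ℕ) + 1 = L
    · have hc : (L : ℝ) - 1 - (i : ℕ) = 0 := by
        have : ((i : ℕ) : ℝ) + 1 = L := by exact_mod_cast hlast
        linarith
      rw [if_neg (by omega), if_neg (by omega), if_neg (by omega), if_neg (by omega),
        if_neg (by omega), if_neg (by omega), if_pos (by omega), hc]
      simp
    · rw [if_neg (show ¬ (i : ℕ) + 1 = 1 by omega),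
        if_neg (show ¬ ((i : ℕ) = 0 ∨ (i : ℕ) + 1 = L) by omega),
        if_pos (show (i : ℕ) + 1 < L by omega), div_one, add_sub_cancel_right,
        show (L : ℝ) - 1 - (i : ℕ) = (L : ℝ) - ((i : ℕ) + 1) by ring]
  have uL : ∀ k : ℕ, k + 1 < m₀ → profile L m₀ x α β k = β * Real.cosh ((k : ℝ) * x) := by
    intro k hk
    unfold profile
    rw [if_pos hk]
  have uM : ∀ k : ℕ, k + 1 = m₀ → profile L m₀ x α β k = α * β := by
    intro k hk
    unfold profile
    rw [if_neg (by omega), if_pos hk]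
  have uR : ∀ k : ℕ, m₀ < k + 1 →
      profile L m₀ x α β k = α * Real.cosh (((L : ℝ) - 1 - k) * x) := by
    intro k hk
    unfold profile
    rw [if_neg (by omega), if_neg (by omega)]
  have hmid : ∀ j : Fin L, (j : ℕ) ≠ 0 → (j : ℕ) + 1 < L →
      v j = profile L m₀ x α β j := by
    intro j h0 h1
    rw [hvu]
    have hw : bdryWeight L j = 1 := by
      unfold bdryWeight
      rw [if_neg (by omega)]
    simp only [hw, div_one]
  have hend : ∀ j : Fin L, ((j : ℕ) = 0 ∨ (j : ℕ) + 1 = L) →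
      v j = profile L m₀ x α β j / Real.sqrt 2 := by
    intro j h0
    rw [hvu]
    have hw : bdryWeight L j = Real.sqrt 2 := by
      unfold bdryWeight
      rw [if_pos h0]
    simp only [hw]
  have pMid : ∀ j : Fin L, (j : ℕ) ≠ 0 → (j : ℕ) + 1 < L → (PiMat L).mulVec v j
      = 1/2 * profile L m₀ x α β j
        - 1/4 * (profile L m₀ x α β ((j : ℕ) - 1) + profile L m₀ x α β ((j : ℕ) + 1)) := by
    intro j h0 h1
    rw [hvu]
    exact piMat_mulVec_mid L _ j h0 h1
  constructor
  · intro j hj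
    have hjL := j.isLt
    rw [hmv j]
    by_cases h0 : (j : ℕ) = 0
    · have hP : (PiMat L).mulVec v j
          = (1/2 * profile L m₀ x α β 0 - 1/2 * profile L m₀ x α β 1) / Real.sqrt 2 := by
        rw [hvu]
        exact piMat_mulVec_zero L (by omega) _ j h0
      rw [hP, hend j (Or.inl h0), h0, uL 0 (by omega)]
      by_cases hm : m₀ = 2
      · -- The left end site is itself adjacent to the defect.
        rw [uM 1 (by omega), if_pos (by omega), if_pos (by simp), hα, hm]
        norm_num
        field_simp
        ring
      · rw [uL 1 (by omega), if_neg (by omega)]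
        norm_num
        ring
    by_cases hlast : (j : ℕ) + 1 = L
    · have hP : (PiMat L).mulVec v j
          = (1/2 * profile L m₀ x α β j - 1/2 * profile L m₀ x α β ((j : ℕ) - 1))
            / Real.sqrt 2 := by
        rw [hvu]
        exact piMat_mulVec_last L (by omega) _ j hlast
      have hjr : ((j : ℕ) : ℝ) = L - 1 := by
        have : ((j : ℕ) : ℝ) + 1 = L := by exact_mod_cast hlast
        linarith
      rw [hP, hend j (Or.inr hlast), uR j (by omega), hjr, sub_self, zero_mul, Real.cosh_zero]
      by_cases hm : m₀ = j
      · -- The right end site is itself adjacent to the defect.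
        have hmr : (m₀ : ℝ) = L - 1 := by rw [hm, hjr]
        have hb : β = Real.cosh x - 2/lam := by
          rw [hβ, hmr]
          ring_nf
          simp
        rw [uM _ (by omega), if_pos (by omega), if_pos (by omega), hb]
        field_simp
        ring
      · rw [uR _ (by omega), if_neg (by omega), Nat.cast_sub (by omega), hjr,
          show ((L : ℝ) - 1 - (L - 1 - ((1 : ℕ) : ℝ))) * x = x by push_cast; ring]
        ring
    have hj1 : 1 ≤ (j : ℕ) := by omega
    rw [pMid j h0 (by omega), hmid j h0 (by omega)]
    have hrec := cosh_recurrence ((j : ℕ) : ℝ) x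
    have hrec' := cosh_recurrence ((L : ℝ) - 1 - (j : ℕ)) x
    rcases lt_trichotomy ((j : ℕ) + 1) m₀ with hlt | heq | hgt
    · rw [uL j hlt, uL ((j : ℕ) - 1) (by omega), Nat.cast_sub hj1, Nat.cast_one]
      by_cases hm : (j : ℕ) + 2 = m₀
      · have hmr : (m₀ : ℝ) = ((j : ℕ) : ℝ) + 2 := by rw [← hm]; push_cast; ring
        have ha : α = Real.cosh ((((j : ℕ) : ℝ) + 1) * x)
            - 2/lam * Real.cosh (((j : ℕ) : ℝ) * x) := by
          rw [hα, hmr]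
          ring_nf
        rw [uM _ (by omega), if_pos (by omega), if_neg (by omega), ha]
        have hc : lam * (2 / lam) = 2 := by field_simp
        linear_combination (lam * β / 4) * hrec
          - (β * Real.cosh (((j : ℕ) : ℝ) * x) / 4) * hc
      · rw [uL _ (by omega), if_neg (by omega), Nat.cast_add, Nat.cast_one]
        linear_combination (lam * β / 4) * hrec
    · exact absurd heq hj
    · rw [uR j hgt, uR ((j : ℕ) + 1) (by omega), Nat.cast_add, Nat.cast_one,
        show (L : ℝ) - 1 - ((j : ℕ) + 1) = L - 1 - (j : ℕ) - 1 by ring]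
      by_cases hm : (j : ℕ) = m₀
      · have hmr : (m₀ : ℝ) = ((j : ℕ) : ℝ) := by rw [hm]
        have hb : β = Real.cosh (((L : ℝ) - 1 - (j : ℕ) + 1) * x)
            - 2/lam * Real.cosh (((L : ℝ) - 1 - (j : ℕ)) * x) := by
          rw [hβ, hmr]
          ring_nf
        rw [uM _ (by omega), if_pos (by omega), if_neg (by omega), hb]
        have hc : lam * (2 / lam) = 2 := by field_simp
        linear_combination (lam * α / 4) * hrec'
          - (α * Real.cosh (((L : ℝ) - 1 - (j : ℕ)) * x) / 4) * hc
      · rw [uR _ (by omega), if_neg (by omega), Nat.cast_sub hj1, Nat.cast_one,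
          show (L : ℝ) - 1 - ((j : ℕ) - 1) = L - 1 - (j : ℕ) + 1 by ring]
        linear_combination (lam * α / 4) * hrec'
  · intro j hj
    rw [hmv j, if_neg (by omega), pMid j (by omega) (by omega), hmid j (by omega) (by omega),
      uM j hj, uL _ (by omega), uR _ (by omega), Nat.cast_sub (by omega)]
    have hjr : ((j : ℕ) : ℝ) = (m₀ : ℝ) - 1 := by
      have : ((j : ℕ) : ℝ) + 1 = m₀ := by exact_mod_cast hj
      linarith
    have hL3 : (L : ℝ) - 3 ≠ 0 := by
      have : (5 : ℝ) ≤ L := by exact_mod_cast hL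
      linarith
    have hy : ((L : ℝ) - 3) * x * ((2*(m₀:ℝ) - L - 1)/((L:ℝ) - 3))
        = ((m₀ : ℝ) - 1 - (L - m₀)) * x := by
      field_simp
      ring
    have key := defect_identity ((m₀ : ℝ) - 1) ((L : ℝ) - m₀) x (1/lam)
    rw [show (m₀ : ℝ) - 1 + (L - m₀) + 1 = L by ring,
      show (m₀ : ℝ) - 1 + (L - m₀) = L - 1 by ring,
      show (L : ℝ) - 1 - 1 = L - 2 by ring, show (L : ℝ) - 1 - 3 = L - 4 by ring,
      show (m₀ : ℝ) - 1 - 1 = m₀ - 2 by ring, show 2 * (1/lam) = 2/lam by ring,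
      ← hα, ← hβ] at key
    unfold Ffun
    rw [hy, Nat.cast_add, hjr, Nat.cast_one, show (m₀ : ℝ) - 1 - 1 = m₀ - 2 by ring,
      show (L : ℝ) - 1 - (m₀ - 1 + 1) = L - m₀ - 1 by ring, show 2 * (1/lam) = 2/lam by ring]
    linear_combination (-lam / 4) * key
end

section
/- Let L ≥ 5 be an integer, λ > 0 a real number, and m₀ ∈ {3, …, L−2}. Let x* be the largest zero of the function t ↦ F(L, t, 1/λ, (2m₀ − L − 1)/(L − 3)) (i.e., F vanishes at x* and does not vanish at any t > x*). Then the largest eigenvalue of the real symmetric matrix Π^{ph}_{e_{m₀}} − λΠ equals λ(cosh(x*) − 1)/2. -/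
/-!
After the diagonal change of variables `v i = κ i * f i`, with `κ = 1/√2` at the two end sites and
`κ = 1` elsewhere, the eigenvalue equation with eigenvalue `lam * (c - 1) / 2` becomes the reflected
three-term recurrence `f (n-1) + f (n+1) + (2/lam) * [n = p or n = p+2] * f n = 2 * c * f n`, with
`f 1 = c * f 0` and `f (L-2) = c * f (L-1)`, where `p = m₀ - 2` and `p + 2 = m₀` are the 0-based
neighbours of the excited site (`isEig_scaled_iff`).

For `c = cosh x` the recurrence with the left boundary condition has, up to a scalar, the unique
solution `sol`: the free wave `cosh (n x)` corrected by a discrete Green function `green` at each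
of the two defects. The right boundary condition for `sol` is exactly `F(L, x, 1/lam, y) = 0`
(`sol_boundary`). Hence `lam * (cosh x - 1) / 2` is an eigenvalue if and only if `F` vanishes at `x`
(`exists_eigenvector_iff`). Every positive eigenvalue has the form `lam * (cosh t - 1) / 2` with
`t ≥ 0`, hence `t ≤ x*`; the nonpositive ones lie below `lam * (cosh x* - 1) / 2 ≥ 0`.
-/

open Matrix

/-! ### The recurrence with two defects and its explicit solution -/

/-- The sequence `sinh (n x) / sinh x`, written as a recurrence in `c = cosh x` so that it makes
sense at `x = 0` too. -/
noncomputable def green (c : ℝ) : ℕ → ℝ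
  | 0 => 0
  | 1 => 1
  | n + 2 => 2 * c * green c (n + 1) - green c n

lemma cosh_rec (x : ℝ) (n : ℕ) :
    Real.cosh (n * x) + Real.cosh (((n + 2 : ℕ) : ℝ) * x)
      = 2 * Real.cosh x * Real.cosh (((n + 1 : ℕ) : ℝ) * x) := by
  have h1 : (n : ℝ) * x = ((n + 1 : ℕ) : ℝ) * x - x := by push_cast; ring
  have h2 : ((n + 2 : ℕ) : ℝ) * x = ((n + 1 : ℕ) : ℝ) * x + x := by push_cast; ring
  rw [h1, h2, Real.cosh_add, Real.cosh_sub]; ring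

lemma green_diff (x : ℝ) (n : ℕ) :
    green (Real.cosh x) (n + 2) - green (Real.cosh x) n
      = 2 * Real.cosh (((n + 1 : ℕ) : ℝ) * x) := by
  induction n using Nat.twoStepInduction with
  | zero => simp [green]
  | one =>
    have h := cosh_rec x 0
    simp only [green]
    norm_num at h ⊢
    linarith
  | more n h1 h2 =>
    have h := cosh_rec x (n + 1)
    rw [show n + 1 + 2 = n + 2 + 1 from rfl] at h
    have e1 : green (Real.cosh x) (n + 2 + 2)
        = 2 * Real.cosh x * green (Real.cosh x) (n + 1 + 2) - green (Real.cosh x) (n + 2) := rfl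
    have e2 : green (Real.cosh x) (n + 2)
        = 2 * Real.cosh x * green (Real.cosh x) (n + 1) - green (Real.cosh x) n := rfl
    linear_combination e1 - e2 + 2 * Real.cosh x * h2 - h1 - 2 * h

/-- `n ↦ green c (n - p)`, extended by zero for `n ≤ p` through truncated subtraction, is a Green
function: it solves the free recurrence except for a unit source at `p`. -/
lemma green_shift (c : ℝ) (p n : ℕ) :
    green c (n - p) + green c (n + 2 - p)
      = 2 * c * green c (n + 1 - p) + if n + 1 = p then 1 else 0 := by
  rcases lt_trichotomy (n + 1) p with h | h | h
  · have h1 : n - p = 0 := by omega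
    have h2 : n + 2 - p = 0 := by omega
    have h3 : n + 1 - p = 0 := by omega
    simp [h1, h2, h3, green, h.ne]
  · subst h
    have h1 : n - (n + 1) = 0 := by omega
    have h2 : n + 2 - (n + 1) = 1 := by omega
    simp [h1, h2, green]
  · obtain ⟨k, rfl⟩ : ∃ k, n = p + k := ⟨n - p, by omega⟩
    have h1 : p + k - p = k := by omega
    have h2 : p + k + 2 - p = k + 2 := by omega
    have h3 : p + k + 1 - p = k + 1 := by omega
    rw [h1, h2, h3, if_neg (by omega), green]; ring

/-- The solution of the recurrence with defects at `p` and `p + 2` and the left boundary condition,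
normalized to `1` at `0`. The factor in the last term is its value at `p + 2`. -/
noncomputable def sol (x w : ℝ) (p n : ℕ) : ℝ :=
  Real.cosh (n * x) - 2 * w * Real.cosh (p * x) * green (Real.cosh x) (n - p)
    - 2 * w * (Real.cosh (((p + 2 : ℕ) : ℝ) * x)
        - 2 * w * Real.cosh (p * x) * green (Real.cosh x) 2) * green (Real.cosh x) (n - (p + 2))

lemma sol_zero (x w : ℝ) (p : ℕ) : sol x w p 0 = 1 := by
  simp [sol, green]

lemma sol_one (x w : ℝ) (p : ℕ) (hp : 1 ≤ p) : sol x w p 1 = Real.cosh x := by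
  have h1 : 1 - p = 0 := by omega
  have h2 : 1 - (p + 2) = 0 := by omega
  simp [sol, green, h1, h2]

lemma sol_rec (x w : ℝ) (p n : ℕ) :
    sol x w p n + sol x w p (n + 2)
        + (if n + 1 = p ∨ n + 1 = p + 2 then 2 * w else 0) * sol x w p (n + 1)
      = 2 * Real.cosh x * sol x w p (n + 1) := by
  have h0 := cosh_rec x n
  have h1 := green_shift (Real.cosh x) p n
  have h2 := green_shift (Real.cosh x) (p + 2) n
  -- the value of `sol` at each defect matches the coefficient of the corresponding source
  have hs : (if n + 1 = p ∨ n + 1 = p + 2 then 2 * w else 0) * sol x w p (n + 1)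
      = 2 * w * Real.cosh (p * x) * (if n + 1 = p then 1 else 0)
        + 2 * w * (Real.cosh (((p + 2 : ℕ) : ℝ) * x)
          - 2 * w * Real.cosh (p * x) * green (Real.cosh x) 2)
          * (if n + 1 = p + 2 then 1 else 0) := by
    by_cases hp : n + 1 = p
    · have e1 : p - (p + 2) = 0 := by omega
      rw [if_pos (Or.inl hp), if_pos hp, if_neg (by omega), hp, sol, e1, Nat.sub_self]
      simp [green]
    · by_cases hq : n + 1 = p + 2
      · have e1 : p + 2 - p = 2 := by omega
        rw [if_pos (Or.inr hq), if_neg hp, if_pos hq, hq, sol, Nat.sub_self, e1]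
        simp only [green]; ring
      · rw [if_neg (by tauto), if_neg hp, if_neg hq]; ring
  rw [hs]
  simp only [sol]
  linear_combination h0 - 2 * w * Real.cosh (p * x) * h1
    - 2 * w * (Real.cosh (((p + 2 : ℕ) : ℝ) * x)
      - 2 * w * Real.cosh (p * x) * green (Real.cosh x) 2) * h2

lemma two_cosh_mul_cosh (a b : ℝ) :
    2 * (Real.cosh a * Real.cosh b) = Real.cosh (a + b) + Real.cosh (a - b) := by
  rw [Real.cosh_add, Real.cosh_sub]; ring

/-- The function `F` measures the failure of `sol` to satisfy the right boundary condition. -/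
lemma sol_boundary (L p : ℕ) (hL : p + 4 ≤ L) (hp : 1 ≤ p) (x w : ℝ) :
    sol x w p (L - 2) - Real.cosh x * sol x w p (L - 1)
      = - Ffun L x w ((2 * ((p + 2 : ℕ) : ℝ) - L - 1) / ((L : ℝ) - 3)) := by
  obtain ⟨k, rfl⟩ := Nat.exists_eq_add_of_le hL
  have a1 : p + 4 + k - 2 = p + 2 + k := by omega
  have a2 : p + 4 + k - 1 = p + 2 + k + 1 := by omega
  rw [a1, a2]
  have hrec := sol_rec x w p (p + 2 + k)
  rw [if_neg (by omega)] at hrec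
  have hd : sol x w p (p + 2 + k + 2) - sol x w p (p + 2 + k)
      = (Real.cosh ((((p + 2 + k + 2 : ℕ)) : ℝ) * x) - Real.cosh (((p + 2 + k : ℕ) : ℝ) * x))
        - 2 * w * Real.cosh (p * x) * (2 * Real.cosh (((k + 2 + 1 : ℕ) : ℝ) * x))
        - 2 * w * (Real.cosh (((p + 2 : ℕ) : ℝ) * x)
          - 2 * w * Real.cosh (p * x) * (2 * Real.cosh x))
          * (2 * Real.cosh (((k + 1 : ℕ) : ℝ) * x)) := by
    rw [← green_diff x k, ← green_diff x (k + 2)]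
    have b1 : p + 2 + k + 2 - p = k + 2 + 2 := by omega
    have b2 : p + 2 + k - p = k + 2 := by omega
    have b3 : p + 2 + k + 2 - (p + 2) = k + 2 := by omega
    have b4 : p + 2 + k - (p + 2) = k := by omega
    have b5 : green (Real.cosh x) 2 = 2 * Real.cosh x := by simp [green]
    simp only [sol, b1, b2, b3, b4, b5]; ring
  have hne : (((p + 4 + k : ℕ) : ℝ) - 3) ≠ 0 := by
    have : (1 : ℝ) ≤ p := by exact_mod_cast hp
    have : (0 : ℝ) ≤ k := k.cast_nonneg
    push_cast; intro h; linarith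
  have hy : (((p + 4 + k : ℕ) : ℝ) - 3) * x
        * ((2 * ((p + 2 : ℕ) : ℝ) - ((p + 4 + k : ℕ) : ℝ) - 1) / (((p + 4 + k : ℕ) : ℝ) - 3))
      = ((p : ℝ) - k - 1) * x := by
    rw [mul_assoc, mul_comm, mul_assoc, div_mul_cancel₀ _ hne]; push_cast; ring
  rw [Ffun, hy]
  -- product-to-sum identities for the four products of hyperbolic cosines in `hd`
  have c1 := two_cosh_mul_cosh ((p : ℝ) * x) (((k : ℝ) + 3) * x)
  have c2 := two_cosh_mul_cosh (((p : ℝ) + 2) * x) (((k : ℝ) + 1) * x)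
  have c3 := two_cosh_mul_cosh ((p : ℝ) * x) (((k : ℝ) + 1) * x)
  have c4 := two_cosh_mul_cosh (((p : ℝ) + k + 1) * x) x
  have c5 := two_cosh_mul_cosh (((p : ℝ) - k - 1) * x) (2 * x)
  have d1 : (p : ℝ) * x + ((k : ℝ) + 3) * x = ((p : ℝ) + k + 3) * x := by ring
  have d2 : (p : ℝ) * x - ((k : ℝ) + 3) * x = ((p : ℝ) - k - 3) * x := by ring
  have d3 : ((p : ℝ) + 2) * x + ((k : ℝ) + 1) * x = ((p : ℝ) + k + 3) * x := by ring
  have d4 : ((p : ℝ) + 2) * x - ((k : ℝ) + 1) * x = ((p : ℝ) - k + 1) * x := by ring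
  have d5 : (p : ℝ) * x + ((k : ℝ) + 1) * x = ((p : ℝ) + k + 1) * x := by ring
  have d6 : (p : ℝ) * x - ((k : ℝ) + 1) * x = ((p : ℝ) - k - 1) * x := by ring
  have d7 : ((p : ℝ) + k + 1) * x + x = ((p : ℝ) + k + 2) * x := by ring
  have d8 : ((p : ℝ) + k + 1) * x - x = ((p : ℝ) + k) * x := by ring
  have d9 : ((p : ℝ) - k - 1) * x + 2 * x = ((p : ℝ) - k + 1) * x := by ring
  have d10 : ((p : ℝ) - k - 1) * x - 2 * x = ((p : ℝ) - k - 3) * x := by ring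
  rw [d1, d2] at c1
  rw [d3, d4] at c2
  rw [d5, d6] at c3
  rw [d7, d8] at c4
  rw [d9, d10] at c5
  have f1 : ((p + 4 + k : ℕ) : ℝ) * x = ((p : ℝ) + k + 4) * x := by push_cast; ring
  have f2 : (((p + 4 + k : ℕ) : ℝ) - 1) * x = ((p : ℝ) + k + 3) * x := by push_cast; ring
  have f3 : (((p + 4 + k : ℕ) : ℝ) - 2) * x = ((p : ℝ) + k + 2) * x := by push_cast; ring
  have f4 : (((p + 4 + k : ℕ) : ℝ) - 4) * x = ((p : ℝ) + k) * x := by push_cast; ring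
  rw [f1, f2, f3, f4]
  have g1 : ((p + 2 + k + 2 : ℕ) : ℝ) * x = ((p : ℝ) + k + 4) * x := by push_cast; ring
  have g2 : ((p + 2 + k : ℕ) : ℝ) * x = ((p : ℝ) + k + 2) * x := by push_cast; ring
  have g3 : ((k + 2 + 1 : ℕ) : ℝ) * x = ((k : ℝ) + 3) * x := by push_cast; ring
  have g4 : ((k + 1 : ℕ) : ℝ) * x = ((k : ℝ) + 1) * x := by push_cast; ring
  have g5 : ((p + 2 : ℕ) : ℝ) * x = ((p : ℝ) + 2) * x := by push_cast; ring
  rw [g1, g2, g3, g4, g5] at hd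
  linear_combination (1 / 2) * hrec - (1 / 2) * hd + w * c1 + w * c2
    - 4 * w ^ 2 * Real.cosh x * c3 - 2 * w ^ 2 * c4 - w * c5

/-! ### The rows of the eigenvalue equation -/

/-- The diagonal scaling that turns the `√2`-weighted end bonds into reflecting boundaries. -/
noncomputable def kappa (L i : ℕ) : ℝ := if i = 0 ∨ i = L - 1 then 1 / Real.sqrt 2 else 1

lemma kappa_ne_zero (L i : ℕ) : kappa L i ≠ 0 := by
  unfold kappa; split_ifs <;> simp

/-- The entries of `Π^{ph}_{e_{m₀}} - lam Π`, with `m₀ = p + 2`, as a function of natural-number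
indices. -/
noncomputable def entry (L p : ℕ) (lam : ℝ) (i j : ℕ) : ℝ :=
  if i = j then (if i = p ∨ i = p + 2 then 1 / 2 else 0) - lam / 2
  else if (i + 1 = j ∧ (i = 0 ∨ i = L - 2)) ∨ (j + 1 = i ∧ (j = 0 ∨ j = L - 2)) then
    lam / (2 * Real.sqrt 2)
  else if i + 1 = j ∨ j + 1 = i then lam / 4
  else 0

lemma matrix_apply (L p : ℕ) (hL : p + 4 ≤ L) (hp : 1 ≤ p) (lam : ℝ) (h : p + 1 < L)
    (i j : Fin L) :
    (PiPh L (eVec L ⟨p + 1, h⟩) - lam • PiMat L) i j = entry L p lam i j := by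
  have hi := i.isLt
  rw [Matrix.sub_apply, Matrix.smul_apply, PiPh, PiMat, Matrix.of_apply, Matrix.diagonal_apply,
    entry, smul_eq_mul]
  simp only [Fin.ext_iff, eVec]
  by_cases hij : (i : ℕ) = j
  · rw [if_pos hij, if_pos hij, if_pos hij]
    have hd : (if (i : ℕ) = 0 then (if h : 1 < L then (if 1 = p + 1 then (1 : ℝ) else 0) else 0)
        else if (i : ℕ) = L - 1 then
          (if h : L - 2 < L then (if L - 2 = p + 1 then (1 : ℝ) else 0) else 0)
        else ((if h : (i : ℕ) - 1 < L then (if (i : ℕ) - 1 = p + 1 then (1 : ℝ) else 0) else 0)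
          + (if h : (i : ℕ) + 1 < L then (if (i : ℕ) + 1 = p + 1 then (1 : ℝ) else 0) else 0)) / 2)
        = (if (i : ℕ) = p ∨ (i : ℕ) = p + 2 then 1 / 2 else 0) := by
      split_ifs <;> first | omega | norm_num
    rw [hd]; ring
  · rw [if_neg hij, if_neg hij, if_neg hij]
    split_ifs <;> ring

lemma mulVec_scaled (L p : ℕ) (hL : p + 4 ≤ L) (hp : 1 ≤ p) (lam : ℝ) (h : p + 1 < L)
    (f : ℕ → ℝ) (i : Fin L) :
    (PiPh L (eVec L ⟨p + 1, h⟩) - lam • PiMat L).mulVec (fun j => kappa L j * f j) i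
      = ∑ j ∈ Finset.range L, entry L p lam i j * (kappa L j * f j) := by
  rw [← Fin.sum_univ_eq_sum_range (fun j => entry L p lam i j * (kappa L j * f j))]
  rw [Matrix.mulVec, dotProduct]
  refine Finset.sum_congr rfl fun j _ => ?_
  rw [matrix_apply L p hL hp]

lemma sqrt_two_aux : 1 / Real.sqrt 2 * (1 / Real.sqrt 2) = 1 / 2 := by
  rw [div_mul_div_comm, Real.mul_self_sqrt (by norm_num)]; norm_num

lemma row_zero (L p : ℕ) (hL : p + 4 ≤ L) (hp : 1 ≤ p) (lam : ℝ) (f : ℕ → ℝ) :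
    ∑ j ∈ Finset.range L, entry L p lam 0 j * (kappa L j * f j)
      = kappa L 0 * (lam / 2 * (f 1 - f 0)) := by
  have hsub : ({0, 1} : Finset ℕ) ⊆ Finset.range L := by
    intro j hj; simp at hj ⊢; omega
  rw [← Finset.sum_subset hsub]
  · rw [Finset.sum_pair (by norm_num)]
    have e0 : entry L p lam 0 0 = - (lam / 2) := by
      rw [entry, if_pos rfl, if_neg (by omega)]; ring
    have e1 : entry L p lam 0 1 = lam / (2 * Real.sqrt 2) := by
      rw [entry, if_neg (by omega), if_pos (by omega)]
    have k0 : kappa L 0 = 1 / Real.sqrt 2 := by simp [kappa]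
    have k1 : kappa L 1 = 1 := by rw [kappa, if_neg (by omega)]
    rw [e0, e1, k0, k1]; ring
  · intro j _ hj
    simp at hj
    rw [entry, if_neg (by omega), if_neg (by omega), if_neg (by omega), zero_mul]

lemma row_last_s19 (L p : ℕ) (hL : p + 4 ≤ L) (lam : ℝ) (f : ℕ → ℝ) :
    ∑ j ∈ Finset.range L, entry L p lam (L - 1) j * (kappa L j * f j)
      = kappa L (L - 1) * (lam / 2 * (f (L - 2) - f (L - 1))) := by
  have hsub : ({L - 2, L - 1} : Finset ℕ) ⊆ Finset.range L := by
    intro j hj; simp at hj ⊢; omega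
  rw [← Finset.sum_subset hsub]
  · rw [Finset.sum_pair (by omega)]
    have e0 : entry L p lam (L - 1) (L - 1) = - (lam / 2) := by
      rw [entry, if_pos rfl, if_neg (by omega)]; ring
    have e1 : entry L p lam (L - 1) (L - 2) = lam / (2 * Real.sqrt 2) := by
      rw [entry, if_neg (by omega), if_pos (by omega)]
    have k0 : kappa L (L - 1) = 1 / Real.sqrt 2 := by simp [kappa]
    have k1 : kappa L (L - 2) = 1 := by rw [kappa, if_neg (by omega)]
    rw [e0, e1, k0, k1]; ring
  · intro j hj' hj
    simp at hj hj'
    rw [entry, if_neg (by omega), if_neg (by omega), if_neg (by omega), zero_mul]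

lemma row_mid_s19 (L p : ℕ) (lam : ℝ) (f : ℕ → ℝ) (n : ℕ) (hn : n + 2 < L) :
    ∑ j ∈ Finset.range L, entry L p lam (n + 1) j * (kappa L j * f j)
      = kappa L (n + 1) * (lam / 4 * (f n + f (n + 2))
        + ((if n + 1 = p ∨ n + 1 = p + 2 then 1 / 2 else 0) - lam / 2) * f (n + 1)) := by
  have hsub : ({n, n + 1, n + 2} : Finset ℕ) ⊆ Finset.range L := by
    intro j hj; simp at hj ⊢; omega
  rw [← Finset.sum_subset hsub]
  · rw [Finset.sum_insert (by simp), Finset.sum_pair (by omega)]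
    have e0 : entry L p lam (n + 1) (n + 1)
        = (if n + 1 = p ∨ n + 1 = p + 2 then 1 / 2 else 0) - lam / 2 := by
      rw [entry, if_pos rfl]
    have e1 : entry L p lam (n + 1) n * kappa L n = lam / 4 := by
      rw [entry, if_neg (by omega), kappa]
      by_cases h0 : n = 0
      · rw [if_pos (by omega), if_pos (by omega)]
        linear_combination (lam / 2) * sqrt_two_aux
      · rw [if_neg (by omega), if_pos (by omega), if_neg (by omega), mul_one]
    have e2 : entry L p lam (n + 1) (n + 2) * kappa L (n + 2) = lam / 4 := by
      rw [entry, if_neg (by omega), kappa]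
      by_cases h0 : n + 3 = L
      · rw [if_pos (by omega), if_pos (by omega)]
        linear_combination (lam / 2) * sqrt_two_aux
      · rw [if_neg (by omega), if_pos (by omega), if_neg (by omega), mul_one]
    have k1 : kappa L (n + 1) = 1 := by rw [kappa, if_neg (by omega)]
    rw [e0, k1]
    linear_combination f n * e1 + f (n + 2) * e2
  · intro j _ hj
    simp at hj
    rw [entry, if_neg (by omega), if_neg (by omega), if_neg (by omega), zero_mul]

/-- The eigenvalue equation in the rescaled variables is the reflected three-term recurrence. -/
lemma isEig_scaled_iff (L p : ℕ) (hL : p + 4 ≤ L) (hp : 1 ≤ p) (lam : ℝ) (hlam : 0 < lam)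
    (h : p + 1 < L) (f : ℕ → ℝ) (c : ℝ) :
    (PiPh L (eVec L ⟨p + 1, h⟩) - lam • PiMat L).mulVec (fun j => kappa L j * f j)
        = (lam * (c - 1) / 2) • (fun j : Fin L => kappa L j * f j) ↔
      f 1 = c * f 0 ∧ f (L - 2) = c * f (L - 1) ∧
      ∀ n, n + 2 < L → f n + f (n + 2)
        + (if n + 1 = p ∨ n + 1 = p + 2 then 2 * (1 / lam) else 0) * f (n + 1)
          = 2 * c * f (n + 1) := by
  have hl : lam ≠ 0 := hlam.ne'
  have hif : ∀ n, (if n + 1 = p ∨ n + 1 = p + 2 then (1 : ℝ) / 2 else 0)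
      = lam / 4 * (if n + 1 = p ∨ n + 1 = p + 2 then 2 * (1 / lam) else 0) := by
    intro n; split_ifs
    · field_simp; norm_num
    · simp
  constructor
  · intro hv
    have hrow : ∀ i : Fin L, ∑ j ∈ Finset.range L, entry L p lam i j * (kappa L j * f j)
        = lam * (c - 1) / 2 * (kappa L i * f i) := fun i => by
      rw [← mulVec_scaled L p hL hp lam h f i, hv]; rfl
    refine ⟨?_, ?_, fun n hn => ?_⟩
    · have h0 := hrow ⟨0, by omega⟩
      rw [row_zero L p hL hp] at h0
      have : kappa L 0 * (lam / 2) ≠ 0 := mul_ne_zero (kappa_ne_zero _ _) (by positivity)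
      apply mul_left_cancel₀ this
      linear_combination h0
    · have h0 := hrow ⟨L - 1, by omega⟩
      rw [row_last_s19 L p hL] at h0
      have : kappa L (L - 1) * (lam / 2) ≠ 0 := mul_ne_zero (kappa_ne_zero _ _) (by positivity)
      apply mul_left_cancel₀ this
      linear_combination h0
    · have h0 := hrow ⟨n + 1, by omega⟩
      rw [row_mid_s19 L p lam f n hn, hif] at h0
      have : kappa L (n + 1) * (lam / 4) ≠ 0 := mul_ne_zero (kappa_ne_zero _ _) (by positivity)
      apply mul_left_cancel₀ this
      linear_combination h0
  · rintro ⟨h0, h1, h2⟩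
    funext i
    rw [mulVec_scaled L p hL hp]
    change _ = lam * (c - 1) / 2 * (kappa L i * f i)
    obtain ⟨i, hi⟩ := i
    simp only
    rcases i with _ | n
    · rw [row_zero L p hL hp]
      linear_combination kappa L 0 * (lam / 2) * h0
    · by_cases hn : n + 2 < L
      · rw [row_mid_s19 L p lam f n hn, hif]
        linear_combination kappa L (n + 1) * (lam / 4) * h2 n hn
      · obtain rfl : L = n + 2 := by omega
        have := row_last_s19 (n + 2) p hL lam f
        rw [show n + 2 - 1 = n + 1 by omega] at this h1
        rw [this]
        linear_combination kappa (n + 2) (n + 1) * (lam / 2) * h1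

/-! ### Eigenvalues as zeros of `F` -/

lemma exists_eigenvector_iff (L p : ℕ) (hL : p + 4 ≤ L) (hp : 1 ≤ p) (lam : ℝ) (hlam : 0 < lam)
    (h : p + 1 < L) (x : ℝ) :
    (∃ v : Fin L → ℝ, v ≠ 0 ∧ (PiPh L (eVec L ⟨p + 1, h⟩) - lam • PiMat L).mulVec v
        = (lam * (Real.cosh x - 1) / 2) • v) ↔
      Ffun L x (1 / lam) ((2 * ((p + 2 : ℕ) : ℝ) - L - 1) / ((L : ℝ) - 3)) = 0 := by
  have hb := sol_boundary L p hL hp x (1 / lam)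
  constructor
  · rintro ⟨v, hv0, hv⟩
    set f : ℕ → ℝ := fun n => if hn : n < L then v ⟨n, hn⟩ / kappa L n else 0 with hf
    have hvf : v = fun j : Fin L => kappa L j * f j := by
      funext j
      simp only [hf, j.isLt, dite_true, Fin.eta]
      rw [mul_div_cancel₀ _ (kappa_ne_zero _ _)]
    rw [hvf, isEig_scaled_iff L p hL hp lam hlam h] at hv
    obtain ⟨h0, h1, h2⟩ := hv
    have hsol : ∀ n, n < L → f n = f 0 * sol x (1 / lam) p n := by
      intro n
      induction n using Nat.twoStepInduction with
      | zero => intro _; rw [sol_zero, mul_one]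
      | one => intro _; rw [sol_one x _ p hp, h0, mul_comm]
      | more n i1 i2 =>
        intro hn
        have a := h2 n hn
        have b := sol_rec x (1 / lam) p n
        rw [i1 (by omega), i2 (by omega)] at a
        linear_combination a - f 0 * b
    have hf0 : f 0 ≠ 0 := by
      intro hz
      apply hv0
      rw [hvf]
      funext j
      rw [hsol j j.isLt, hz]; simp
    rw [hsol _ (by omega), hsol (L - 1) (by omega)] at h1
    have : f 0 * Ffun L x (1 / lam) ((2 * ((p + 2 : ℕ) : ℝ) - L - 1) / ((L : ℝ) - 3)) = 0 := by
      linear_combination -h1 + f 0 * hb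
    exact (mul_eq_zero.mp this).resolve_left hf0
  · intro hF
    refine ⟨fun j => kappa L j * sol x (1 / lam) p j, ?_, ?_⟩
    · intro hz
      have := congrFun hz ⟨0, by omega⟩
      simp [sol_zero, kappa_ne_zero] at this
    · rw [isEig_scaled_iff L p hL hp lam hlam h]
      refine ⟨?_, ?_, fun n _ => sol_rec _ _ _ _⟩
      · rw [sol_one x _ p hp, sol_zero, mul_one]
      · rw [hF] at hb; linarith

theorem stmt_19 (L : ℕ) (hL : 5 ≤ L) (lam : ℝ) (hlam : 0 < lam)
    (m₀ : ℕ) (hm₀ : 3 ≤ m₀ ∧ m₀ ≤ L - 2) (xstar : ℝ)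
    (hroot : Ffun L xstar (1/lam) ((2*(m₀:ℝ) - L - 1)/((L:ℝ) - 3)) = 0)
    (hmax : ∀ t : ℝ, xstar < t →
      Ffun L t (1/lam) ((2*(m₀:ℝ) - L - 1)/((L:ℝ) - 3)) ≠ 0) :
    IsMaxEigenvalue (PiPh L (eVec L ⟨m₀ - 1, by omega⟩) - lam • PiMat L)
      (lam*(Real.cosh xstar - 1)/2) := by
  obtain ⟨p, rfl⟩ : ∃ p, m₀ = p + 2 := ⟨m₀ - 2, by omega⟩
  have key := exists_eigenvector_iff L p (by omega) (by omega) lam hlam (by omega)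
  refine ⟨(key xstar).2 hroot, ?_⟩
  intro μ hμ
  have hc := Real.one_le_cosh xstar
  rcases le_or_gt μ 0 with hneg | hpos
  · have : 0 ≤ lam * (Real.cosh xstar - 1) / 2 := by
      have : 0 ≤ Real.cosh xstar - 1 := by linarith
      positivity
    linarith
  · have h1 : 1 ≤ 1 + 2 * μ / lam := by
      have : 0 ≤ 2 * μ / lam := by positivity
      linarith
    set t := Real.arcosh (1 + 2 * μ / lam) with ht
    have hcosh : Real.cosh t = 1 + 2 * μ / lam := Real.cosh_arcosh h1
    have hμt : μ = lam * (Real.cosh t - 1) / 2 := by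
      rw [hcosh]; field_simp; ring
    have ht0 : 0 ≤ t := Real.arcosh_nonneg h1
    rw [hμt] at hμ
    have hF := (key t).1 hμ
    have htx : t ≤ xstar := not_lt.mp fun hlt => hmax t hlt hF
    have : Real.cosh t ≤ Real.cosh xstar := by
      rw [Real.cosh_le_cosh, abs_of_nonneg ht0, abs_of_nonneg (ht0.trans htx)]; exact htx
    rw [hμt]
    gcongr
end
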